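/- Let q > 7, let B be a Baer subplane of PG(2,q²) tangent to ℓ∞ at T̄ = B ∩ ℓ∞, and let C be an F_q-conic contained in B with T̄ ∉ C. Then φ(C) is a 4-dimensional normal rational curve N of PG(4,q) disjoint from Σ∞, and the extension of N to PG(4,q⁴) meets the hyperplane z = 0 only in points of g✶ ∪ (g^q)✶. More precisely: if C⁺ meets ℓ∞ in two distinct points P̄, Q̄ then the extension of N to PG(4,q²) contains the two points P, Q of g; if C⁺ is tangent to ℓ∞ at P̄ then the extension of N to PG(4,q²) meets g exactly in the point P; and if C⁺ ∩ ℓ∞ = ∅ then the extension of N to PG(4,q²) is disjoint from the hyperplane z = 0 and the extension of N to PG(4,q⁴) meets g✶ in two points of g✶ ∖ g. -/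

import Mathlib

open scoped Classical
open Matrix

noncomputable section

namespace BaerConics

/-- Points of the projective space `PG(n-1, K)` as projectivization of `Fin n → K`. -/
abbrev PP (K : Type) [Field K] (n : ℕ) : Type := Projectivization K (Fin n → K)

variable {K : Type} [Field K] {m n : ℕ}

/-- The (at most one) projective point determined by a vector:  empty if `v = 0`,
and the singleton `{[v]}` otherwise. -/
def projPt (v : Fin n → K) : Set (PP K n) :=
  {p | ∃ h : v ≠ 0, p = Projectivization.mk K v h}

/-- The set of projective points lying in a linear subspace. -/
def ptsOf (W : Submodule K (Fin n → K)) : Set (PP K n) :=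
  {p | p.rep ∈ W}

/-- The projective line through two points (as the set of points of the span). -/
def lineTh (P Q : PP K n) : Set (PP K n) :=
  ptsOf (Submodule.span K {P.rep, Q.rep})

/-- `X` is a projective flat of projective dimension `d`. -/
def IsFlat (d : ℕ) (X : Set (PP K n)) : Prop :=
  ∃ W : Submodule K (Fin n → K), Module.finrank K W = d + 1 ∧ X = ptsOf W

/-- Image of a set of vectors under the projective map induced by a matrix. -/
def mimg (M : Matrix (Fin m) (Fin n) K) (X : Set (Fin n → K)) : Set (PP K m) :=
  {p | ∃ v ∈ X, p ∈ projPt (M.mulVec v)}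

/-- Coordinatewise application of a ring homomorphism to a vector. -/
def mapVec {L : Type} [Field L] (σ : K →+* L) (v : Fin n → K) : Fin n → L :=
  fun i => σ (v i)

lemma mulVec_inj (M : Matrix (Fin n) (Fin n) K) (hM : IsUnit M.det) :
    Function.Injective M.mulVec := by
  intro a b hab
  have h := congrArg (fun v => M⁻¹.mulVec v) hab
  simpa [Matrix.mulVec_mulVec, Matrix.nonsing_inv_mul M hM] using h

/-- The projective transformation induced by an invertible matrix. -/
def pmap (M : Matrix (Fin n) (Fin n) K) (hM : IsUnit M.det) (p : PP K n) : PP K n :=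
  Projectivization.mk K (M.mulVec p.rep) (by
    intro h
    apply p.rep_nonzero
    have h0 : M.mulVec p.rep = M.mulVec 0 := by simpa [Matrix.mulVec_zero] using h
    exact mulVec_inj M hM h0)

/-- The map induced on projective points by the coordinatewise `q`-power map. -/
def frobPt (q : ℕ) (p : PP K n) : PP K n :=
  Projectivization.mk K (fun i => p.rep i ^ q) (by
    obtain ⟨i, hi⟩ := Function.ne_iff.mp p.rep_nonzero
    intro h
    exact pow_ne_zero q (by simpa using hi) (by simpa using congrFun h i))

/-- The line at infinity `z = 0` of `PG(2, K)`. -/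
def linf (K : Type) [Field K] : Set (PP K 3) := {p | p.rep 2 = 0}

/-- Coordinatewise application of the algebra map to a vector. -/
def algVec (F : Type) {K : Type} [Field F] [Field K] [Algebra F K] {n : ℕ}
    (v : Fin n → F) : Fin n → K := fun i => algebraMap F K (v i)

/-- Vectors representing the points of the standard Baer subline of `ℓ∞`. -/
def sublineVecs (F K : Type) [Field F] [Field K] [Algebra F K] : Set (Fin 3 → K) :=
  {v | ∃ θ : F, v = ![algebraMap F K θ, 1, 0]} ∪ {![1, 0, 0]}

/-- Nonzero vectors representing the points of `ℓ∞`. -/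
def linfVecs (K : Type) [Field K] : Set (Fin 3 → K) := {v | v ≠ 0 ∧ v 2 = 0}

/-- Vectors with all coordinates in (the image of) `F`, representing the canonical
Baer subplane. -/
def subplaneVecs (F K : Type) [Field F] [Field K] [Algebra F K] : Set (Fin 3 → K) :=
  {v | ∃ w : Fin 3 → F, w ≠ 0 ∧ v = algVec F w}

/-- Vectors of the standard conic with parameters in `S`. -/
def conicVecs {K : Type} [Field K] (S : Set K) : Set (Fin 3 → K) :=
  {v | ∃ θ ∈ S, v = ![1, θ, θ ^ 2]} ∪ {![0, 0, 1]}

/-- `b` is a Baer subline of the line `ℓ` of `PG(2,q²)`. -/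
def IsBaerSublineOf (F : Type) {K : Type} [Field F] [Field K] [Algebra F K]
    (b ℓ : Set (PP K 3)) : Prop :=
  ∃ M : Matrix (Fin 3) (Fin 3) K, IsUnit M.det ∧
    ℓ = mimg M (linfVecs K) ∧ b = mimg M (sublineVecs F K)

/-- `B` is a Baer subplane of `PG(2,q²)`. -/
def IsBaerSubplane (F : Type) {K : Type} [Field F] [Field K] [Algebra F K]
    (B : Set (PP K 3)) : Prop :=
  ∃ M : Matrix (Fin 3) (Fin 3) K, IsUnit M.det ∧ B = mimg M (subplaneVecs F K)

/-- `C` is the image under `PGL(3,K)` of the standard conic with parameters in `S`. -/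
def IsConicOver {K : Type} [Field K] (S : Set K) (C : Set (PP K 3)) : Prop :=
  ∃ M : Matrix (Fin 3) (Fin 3) K, IsUnit M.det ∧ C = mimg M (conicVecs S)

/-- An `F_q`-conic of `PG(2,q²)`: a nondegenerate conic of a Baer subplane. -/
def IsFqConic (F : Type) {K : Type} [Field F] [Field K] [Algebra F K]
    (C : Set (PP K 3)) : Prop :=
  IsConicOver (Set.range (algebraMap F K)) C

/-- An `F_{q²}`-conic of `PG(2,q²)`: a nondegenerate conic. -/
def IsFq2Conic {K : Type} [Field K] (C : Set (PP K 3)) : Prop :=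
  IsConicOver (Set.univ : Set K) C

/-- `𝒦` is an `ℓ∞`-Baer pencil with vertex `P`. -/
def IsLinfBaerPencil (F : Type) {K : Type} [Field F] [Field K] [Algebra F K]
    (𝒦 : Set (PP K 3)) (P : PP K 3) : Prop :=
  P ∈ linf K ∧ ∃ ℓ b : Set (PP K 3), IsBaerSublineOf F b ℓ ∧ P ∉ ℓ ∧
    (∃! X, X ∈ b ∩ linf K) ∧ 𝒦 = ⋃ X ∈ b, lineTh P X

/-- `m` is a line of the Baer subplane `B`, with extension (full line) `ℓ`. -/
def IsLineOfExt {K : Type} [Field K] (q : ℕ) (B m ℓ : Set (PP K 3)) : Prop :=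
  IsFlat 1 ℓ ∧ m = B ∩ ℓ ∧ m.ncard = q + 1

/-- `m` is a line of the Baer subplane `B`. -/
def IsLineOf {K : Type} [Field K] (q : ℕ) (B m : Set (PP K 3)) : Prop :=
  ∃ ℓ, IsLineOfExt q B m ℓ

/-- `P` and `Q` are conjugate with respect to the Baer subline `b` of `ℓ∞`. -/
def ConjWrtSubline (F : Type) {K : Type} [Field F] [Field K] [Algebra F K]
    (q : ℕ) (b : Set (PP K 3)) (P Q : PP K 3) : Prop :=
  ∃ (M : Matrix (Fin 3) (Fin 3) K) (hM : IsUnit M.det),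
    mimg M (linfVecs K) = linf K ∧ b = mimg M (sublineVecs F K) ∧
    ∃ P₀ : PP K 3, P = pmap M hM P₀ ∧ Q = pmap M hM (frobPt q P₀)

/-- A representative vector for the point `(δ,1,0)` (resp. `(1,0,0)`) of `ℓ∞`. -/
def ptInfVec {K : Type} [Field K] : Option K → Fin 3 → K
  | some δ => ![δ, 1, 0]
  | none => ![1, 0, 0]

lemma ptInfVec_ne {K : Type} [Field K] (t : Option K) : ptInfVec t ≠ 0 := by
  cases t with
  | none => intro h; have h0 := congrFun h 0; simp [ptInfVec] at h0
  | some δ => intro h; have h0 := congrFun h 1; simp [ptInfVec] at h0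

/-- The point of `ℓ∞` with parameter `δ ∈ K ∪ {∞}`. -/
def ptInf {K : Type} [Field K] (t : Option K) : PP K 3 :=
  Projectivization.mk K (ptInfVec t) (ptInfVec_ne t)

/-- The hyperplane at infinity `z = 0` of `PG(4, F)`. -/
def sinf (F : Type) [Field F] : Set (PP F 5) := {p | p.rep 4 = 0}

/-- Affine coordinates of the Bruck-Bose image of an affine point of `PG(2,q²)`. -/
def bbVec {F K : Type} [Field F] [Field K] (c0 c1 : K → F) (p : PP K 3) : Fin 5 → F :=
  ![c0 (p.rep 0 / p.rep 2), c1 (p.rep 0 / p.rep 2),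
    c0 (p.rep 1 / p.rep 2), c1 (p.rep 1 / p.rep 2), 1]

/-- The Bruck-Bose map (meaningful on affine points of `PG(2,q²)`). -/
def bb {F K : Type} [Field F] [Field K] (c0 c1 : K → F) (p : PP K 3) : PP F 5 :=
  Projectivization.mk F (bbVec c0 c1 p) (by
    intro h
    have h4 := congrFun h 4
    simp [bbVec] at h4)

/-- First spanning vector of the spread line with parameter `δ ∈ K ∪ {∞}`. -/
def spreadV1 {F K : Type} [Field F] [Field K] (c0 c1 : K → F) : Option K → Fin 5 → F
  | some δ => ![c0 δ, c1 δ, 1, 0, 0]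
  | none => ![1, 0, 0, 0, 0]

/-- Second spanning vector of the spread line with parameter `δ ∈ K ∪ {∞}`. -/
def spreadV2 {F K : Type} [Field F] [Field K] (c0 c1 : K → F) (t0 t1 : F) :
    Option K → Fin 5 → F
  | some δ => ![t0 * c1 δ, c0 δ + t1 * c1 δ, 0, 1, 0]
  | none => ![0, 1, 0, 0, 0]

/-- The line of the regular spread `S` with parameter `δ ∈ K ∪ {∞}`. -/
def spreadLine {F K : Type} [Field F] [Field K] (c0 c1 : K → F) (t0 t1 : F)
    (t : Option K) : Set (PP F 5) :=
  ptsOf (Submodule.span F {spreadV1 c0 c1 t, spreadV2 c0 c1 t0 t1 t})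

/-- The extension `[T]⋆` of a spread line to `PG(4,q²)`. -/
def extSpreadLine (F : Type) {K : Type} [Field F] [Field K] [Algebra F K]
    (c0 c1 : K → F) (t0 t1 : F) (t : Option K) : Set (PP K 5) :=
  ptsOf (Submodule.span K
    {algVec F (spreadV1 c0 c1 t), algVec F (spreadV2 c0 c1 t0 t1 t)})

/-- The `K`-extension of an `F`-subspace. -/
def extSub (F : Type) {K : Type} [Field F] [Field K] [Algebra F K] {n : ℕ}
    (W : Submodule F (Fin n → F)) : Submodule K (Fin n → K) :=
  Submodule.span K (algVec F '' (W : Set (Fin n → F)))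

def A0v {K : Type} [Field K] (τ : K) (q : ℕ) : Fin 5 → K := ![τ ^ q, -1, 0, 0, 0]
def A1v {K : Type} [Field K] (τ : K) (q : ℕ) : Fin 5 → K := ![0, 0, τ ^ q, -1, 0]
def B0v {K : Type} [Field K] (τ : K) : Fin 5 → K := ![τ, -1, 0, 0, 0]
def B1v {K : Type} [Field K] (τ : K) : Fin 5 → K := ![0, 0, τ, -1, 0]

/-- The transversal line `g` of the regular spread, in `PG(4,q²)`. -/
def gline {K : Type} [Field K] (τ : K) (q : ℕ) : Set (PP K 5) :=
  ptsOf (Submodule.span K {A0v τ q, A1v τ q})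

/-- The conjugate transversal line `g^q` of the regular spread, in `PG(4,q²)`. -/
def gqline {K : Type} [Field K] (τ : K) : Set (PP K 5) :=
  ptsOf (Submodule.span K {B0v τ, B1v τ})

/-- Representative vector of the point `T = δA₀ + A₁` of `g`. -/
def gptVec {K : Type} [Field K] (τ : K) (q : ℕ) : Option K → Fin 5 → K
  | some δ => δ • A0v τ q + A1v τ q
  | none => A0v τ q

/-- Representative vector of the conjugate point `T^q = δ^q A₀^q + A₁^q` of `g^q`. -/
def gqptVec {K : Type} [Field K] (τ : K) (q : ℕ) : Option K → Fin 5 → K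
  | some δ => δ ^ q • B0v τ + B1v τ
  | none => B0v τ

lemma gptVec_ne {K : Type} [Field K] (τ : K) (q : ℕ) (t : Option K) :
    gptVec τ q t ≠ 0 := by
  cases t with
  | none =>
      intro h
      have := congrFun h 1
      simp [gptVec, A0v] at this
  | some δ =>
      intro h
      have := congrFun h 3
      simp [gptVec, A0v, A1v] at this

lemma gqptVec_ne {K : Type} [Field K] (τ : K) (q : ℕ) (t : Option K) :
    gqptVec τ q t ≠ 0 := by
  cases t with
  | none =>
      intro h
      have := congrFun h 1
      simp [gqptVec, B0v] at this
  | some δ =>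
      intro h
      have := congrFun h 3
      simp [gqptVec, B0v, B1v] at this

/-- The point of `g` corresponding to the point of `ℓ∞` with parameter `δ ∈ K ∪ {∞}`. -/
def gpt {K : Type} [Field K] (τ : K) (q : ℕ) (t : Option K) : PP K 5 :=
  Projectivization.mk K (gptVec τ q t) (gptVec_ne τ q t)

/-- The point of `g^q` conjugate to `gpt τ q t`. -/
def gqpt {K : Type} [Field K] (τ : K) (q : ℕ) (t : Option K) : PP K 5 :=
  Projectivization.mk K (gqptVec τ q t) (gqptVec_ne τ q t)

/-- Evaluation of the quadratic form with matrix `M` at `v`. -/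
def qeval {K : Type} [Field K] {n : ℕ} (M : Matrix (Fin n) (Fin n) K) (v : Fin n → K) : K :=
  v ⬝ᵥ M.mulVec v

/-- Vectors of the standard twisted cubic (inside the hyperplane `x₄ = 0`)
with parameters in `S`. -/
def tcVecs {K : Type} [Field K] (S : Set K) : Set (Fin 5 → K) :=
  {v | ∃ θ ∈ S, v = ![1, θ, θ ^ 2, θ ^ 3, 0]} ∪ {![0, 0, 0, 1, 0]}

/-- Vectors of the standard 4-dimensional normal rational curve with parameters in `S`. -/
def nrcVecs {K : Type} [Field K] (S : Set K) : Set (Fin 5 → K) :=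
  {v | ∃ θ ∈ S, v = ![1, θ, θ ^ 2, θ ^ 3, θ ^ 4]} ∪ {![0, 0, 0, 0, 1]}

/-- `R` is a regulus of `Σ∞` in `PG(4,q)`. -/
def IsRegulus {F : Type} [Field F] (q : ℕ) (R : Set (Set (PP F 5))) : Prop :=
  R.ncard = q + 1 ∧
  (∀ ℓ ∈ R, IsFlat 1 ℓ ∧ ℓ ⊆ sinf F) ∧
  (∀ ℓ ∈ R, ∀ ℓ' ∈ R, ℓ ≠ ℓ' → ℓ ∩ ℓ' = ∅) ∧
  (∀ mℓ : Set (PP F 5), IsFlat 1 mℓ → mℓ ⊆ sinf F →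
    (∃ ℓ₁ ∈ R, ∃ ℓ₂ ∈ R, ∃ ℓ₃ ∈ R, ℓ₁ ≠ ℓ₂ ∧ ℓ₁ ≠ ℓ₃ ∧ ℓ₂ ≠ ℓ₃ ∧
      (mℓ ∩ ℓ₁).Nonempty ∧ (mℓ ∩ ℓ₂).Nonempty ∧ (mℓ ∩ ℓ₃).Nonempty) →
    ∀ ℓ ∈ R, (mℓ ∩ ℓ).Nonempty)


/-- The extension `g✶` of the transversal `g` to `PG(4,q⁴)`. -/
def glineL {K L : Type} [Field K] [Field L] (σ : K →+* L) (τ : K) (qq : ℕ) :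
    Set (PP L 5) :=
  ptsOf (Submodule.span L {mapVec σ (A0v τ qq), mapVec σ (A1v τ qq)})

/-- The extension `(g^q)✶` of the transversal `g^q` to `PG(4,q⁴)`. -/
def gqlineL {K L : Type} [Field K] [Field L] (σ : K →+* L) (τ : K) : Set (PP L 5) :=
  ptsOf (Submodule.span L {mapVec σ (B0v τ), mapVec σ (B1v τ)})

/-- The points of `g` (i.e. with parameter in `K ∪ {∞}`), viewed inside `PG(4,q⁴)`. -/
def gKinL {K L : Type} [Field K] [Field L] (σ : K →+* L) (τ : K) (qq : ℕ) :
    Set (PP L 5) :=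
  ⋃ t : Option K, projPt (mapVec σ (gptVec τ qq t))


lemma mem_projPt_smul {v : Fin n → K} {c : K} (hc : c ≠ 0) (p : PP K n) :
    p ∈ projPt (c • v) ↔ p ∈ projPt v := by
  unfold projPt
  constructor
  · rintro ⟨h, rfl⟩
    have hv : v ≠ 0 := fun h0 => h (by simp [h0])
    refine ⟨hv, ?_⟩
    rw [Projectivization.mk_eq_mk_iff']
    exact ⟨c, rfl⟩
  · rintro ⟨h, rfl⟩
    refine ⟨smul_ne_zero hc h, ?_⟩
    rw [Projectivization.mk_eq_mk_iff']
    exact ⟨c⁻¹, by rw [smul_smul, inv_mul_cancel₀ hc, one_smul]⟩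

lemma mk_rep_smul (v : Fin n → K) (hv : v ≠ 0) :
    ∃ a : K, a ≠ 0 ∧ (Projectivization.mk K v hv).rep = a • v := by
  obtain ⟨a, ha⟩ := Projectivization.exists_smul_eq_mk_rep K v hv
  exact ⟨a, a.ne_zero, ha.symm⟩

lemma mk_mem_ptsOf (v : Fin n → K) (hv : v ≠ 0) (W : Submodule K (Fin n → K)) :
    Projectivization.mk K v hv ∈ ptsOf W ↔ v ∈ W := by
  obtain ⟨a, ha, h⟩ := mk_rep_smul v hv
  show _ ∈ W ↔ _
  rw [h]
  exact Submodule.smul_mem_iff W ha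

lemma mk_mem_sinf (v : Fin 5 → K) (hv : v ≠ 0) :
    Projectivization.mk K v hv ∈ sinf K ↔ v 4 = 0 := by
  obtain ⟨a, ha, h⟩ := mk_rep_smul v hv
  show _ = _ ↔ _
  rw [h]
  simp [ha]

lemma mk_mem_linf (v : Fin 3 → K) (hv : v ≠ 0) :
    Projectivization.mk K v hv ∈ linf K ↔ v 2 = 0 := by
  obtain ⟨a, ha, h⟩ := mk_rep_smul v hv
  show _ = _ ↔ _
  rw [h]
  simp [ha]

def cv (s t : K) : Fin 3 → K := ![s ^ 2, s * t, t ^ 2]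
def nv (s t : K) : Fin 5 → K := ![s ^ 4, s ^ 3 * t, s ^ 2 * t ^ 2, s * t ^ 3, t ^ 4]

lemma mem_mimg_nrc (M : Matrix (Fin m) (Fin 5) K) (p : PP K m) :
    p ∈ mimg M (nrcVecs (Set.univ : Set K)) ↔
      ∃ s t : K, (s ≠ 0 ∨ t ≠ 0) ∧ p ∈ projPt (M.mulVec (nv s t)) := by
  constructor
  · rintro ⟨v, (⟨θ, -, rfl⟩ | rfl), hp⟩
    · exact ⟨1, θ, Or.inl one_ne_zero, by simpa [nv] using hp⟩
    · refine ⟨0, 1, Or.inr one_ne_zero, by simpa [nv] using hp⟩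
  · rintro ⟨s, t, hst, hp⟩
    by_cases hs : s = 0
    · have ht : t ≠ 0 := by tauto
      refine ⟨_, Or.inr rfl, ?_⟩
      have : nv s t = (t ^ 4) • ![0, 0, 0, 0, 1] := by
        ext i; fin_cases i <;> simp [nv, hs]
      rw [this, Matrix.mulVec_smul, mem_projPt_smul (pow_ne_zero _ ht)] at hp
      exact hp
    · refine ⟨_, Or.inl ⟨t / s, trivial, rfl⟩, ?_⟩
      have : nv s t = (s ^ 4) • ![1, t / s, (t / s) ^ 2, (t / s) ^ 3, (t / s) ^ 4] := by
        ext i; fin_cases i <;> simp [nv] <;> field_simp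
      rw [this, Matrix.mulVec_smul, mem_projPt_smul (pow_ne_zero _ hs)] at hp
      exact hp

lemma mem_mimg_conic {F : Type} [Field F] [Algebra F K] (M : Matrix (Fin m) (Fin 3) K)
    (p : PP K m) :
    p ∈ mimg M (conicVecs (Set.range (algebraMap F K))) ↔
      ∃ s t : F, (s ≠ 0 ∨ t ≠ 0) ∧
        p ∈ projPt (M.mulVec (cv (algebraMap F K s) (algebraMap F K t))) := by
  constructor
  · rintro ⟨v, (⟨_, ⟨θ, rfl⟩, rfl⟩ | rfl), hp⟩
    · exact ⟨1, θ, Or.inl one_ne_zero, by simpa [cv] using hp⟩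
    · refine ⟨0, 1, Or.inr one_ne_zero, by simpa [cv] using hp⟩
  · rintro ⟨s, t, hst, hp⟩
    by_cases hs : s = 0
    · have ht : algebraMap F K t ≠ 0 := by
        rw [Ne, FaithfulSMul.algebraMap_eq_zero_iff]; tauto
      refine ⟨_, Or.inr rfl, ?_⟩
      have : cv (algebraMap F K s) (algebraMap F K t)
          = ((algebraMap F K t) ^ 2) • ![0, 0, 1] := by
        ext i; fin_cases i <;> simp [cv, hs]
      rw [this, Matrix.mulVec_smul, mem_projPt_smul (pow_ne_zero _ ht)] at hp
      exact hp
    · have hs' : algebraMap F K s ≠ 0 := by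
        rwa [Ne, FaithfulSMul.algebraMap_eq_zero_iff]
      refine ⟨_, Or.inl ⟨_, ⟨t / s, rfl⟩, rfl⟩, ?_⟩
      have : cv (algebraMap F K s) (algebraMap F K t) = ((algebraMap F K s) ^ 2) •
          ![1, algebraMap F K (t / s), (algebraMap F K (t / s)) ^ 2] := by
        ext i; fin_cases i <;> simp [cv] <;> field_simp
      rw [this, Matrix.mulVec_smul, mem_projPt_smul (pow_ne_zero _ hs')] at hp
      exact hp

lemma mem_mimg_conic_univ (M : Matrix (Fin m) (Fin 3) K)
    (p : PP K m) :
    p ∈ mimg M (conicVecs (Set.univ : Set K)) ↔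
      ∃ s t : K, (s ≠ 0 ∨ t ≠ 0) ∧ p ∈ projPt (M.mulVec (cv s t)) := by
  have := mem_mimg_conic (F := K) M p
  simpa using this

lemma cv_ne {s t : K} (h : s ≠ 0 ∨ t ≠ 0) : cv s t ≠ 0 := by
  intro h0
  have h1 := congrFun h0 0
  have h2 := congrFun h0 2
  simp [cv] at h1 h2
  tauto

lemma nv_ne {s t : K} (h : s ≠ 0 ∨ t ≠ 0) : nv s t ≠ 0 := by
  intro h0
  have h1 := congrFun h0 0
  have h2 := congrFun h0 4
  simp [nv] at h1 h2
  tauto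

lemma mulVec_ne {M : Matrix (Fin n) (Fin n) K} (hM : IsUnit M.det) {v : Fin n → K}
    (hv : v ≠ 0) : M.mulVec v ≠ 0 := by
  intro h
  exact hv (mulVec_inj M hM (by simpa using h))

lemma map_det_unit {E : Type} [Field E] {M : Matrix (Fin n) (Fin n) K} (hM : IsUnit M.det)
    (σ : K →+* E) : IsUnit (M.map σ).det := by
  have : (M.map σ).det = σ M.det := by
    rw [RingHom.map_det]; rfl
  rw [this]
  exact hM.map σ

lemma fixed_mem_range {F E : Type} [Field F] [Fintype F] [Field E] [Algebra F E] (x : E)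
    (hx : x ^ Fintype.card F = x) : x ∈ Set.range (algebraMap F E) := by
  by_contra hcon
  have hp : (Polynomial.X ^ Fintype.card F - Polynomial.X : Polynomial E) ≠ 0 :=
    FiniteField.X_pow_card_sub_X_ne_zero E Fintype.one_lt_card
  have hsub : insert x (Finset.univ.image (algebraMap F E)) ⊆
      (Polynomial.X ^ Fintype.card F - Polynomial.X : Polynomial E).roots.toFinset := by
    intro y hy
    rw [Multiset.mem_toFinset, Polynomial.mem_roots hp]
    simp only [Finset.mem_insert, Finset.mem_image, Finset.mem_univ, true_and] at hy
    rcases hy with rfl | ⟨a, rfl⟩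
    · simp [hx]
    · simp [← map_pow, FiniteField.pow_card]
  have h1 := Finset.card_le_card hsub
  rw [Finset.card_insert_of_notMem (by simpa using hcon),
    Finset.card_image_of_injective _ (algebraMap F E).injective, Finset.card_univ] at h1
  have h2 := Multiset.toFinset_card_le
    (Polynomial.X ^ Fintype.card F - Polynomial.X : Polynomial E).roots
  have h3 := Polynomial.card_roots' (Polynomial.X ^ Fintype.card F - Polynomial.X : Polynomial E)
  rw [FiniteField.X_pow_card_sub_X_natDegree_eq E Fintype.one_lt_card] at h3
  omega

def conv3 (a b : Fin 3 → K) : Fin 5 → K :=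
  ![a 0 * b 0, a 0 * b 1 + a 1 * b 0, a 0 * b 2 + a 1 * b 1 + a 2 * b 0,
    a 1 * b 2 + a 2 * b 1, a 2 * b 2]

def ev {E : Type} [Field E] (σ : K →+* E) (a : Fin 3 → K) (s t : E) : E :=
  σ (a 0) * s ^ 2 + σ (a 1) * (s * t) + σ (a 2) * t ^ 2

lemma mulVec_cv {E : Type} [Field E] (σ : K →+* E) (M : Matrix (Fin 3) (Fin 3) K) (s t : E)
    (i : Fin 3) : ((M.map σ).mulVec (cv s t)) i = ev σ (M i) s t := by
  simp [Matrix.mulVec, dotProduct, Fin.sum_univ_three, cv, ev]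

lemma mulVec_cv_id (M : Matrix (Fin 3) (Fin 3) K) (s t : K)
    (i : Fin 3) : (M.mulVec (cv s t)) i = ev (RingHom.id K) (M i) s t := by
  simp [Matrix.mulVec, dotProduct, Fin.sum_univ_three, cv, ev]

structure Rel (F : Type) [Field F] [Algebra F K] (M N : Matrix (Fin 3) (Fin 3) K) (τ τ' : K)
    (M5 : Matrix (Fin 5) (Fin 5) F) : Prop where
  h01 : ∀ k, algebraMap F K (M5 0 k) + algebraMap F K (M5 1 k) * τ = conv3 (M 0) (N 2) k
  h01' : ∀ k, algebraMap F K (M5 0 k) + algebraMap F K (M5 1 k) * τ' = conv3 (N 0) (M 2) k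
  h23 : ∀ k, algebraMap F K (M5 2 k) + algebraMap F K (M5 3 k) * τ = conv3 (M 1) (N 2) k
  h23' : ∀ k, algebraMap F K (M5 2 k) + algebraMap F K (M5 3 k) * τ' = conv3 (N 1) (M 2) k
  h4 : ∀ k, algebraMap F K (M5 4 k) = conv3 (M 2) (N 2) k

lemma conv_ev {E : Type} [Field E] (σ : K →+* E) (a b : Fin 3 → K) (s t : E) :
    ∑ k, σ (conv3 a b k) * nv s t k = ev σ a s t * ev σ b s t := by
  simp [Fin.sum_univ_five, conv3, nv, ev]
  ring

lemma row_ev {F : Type} [Field F] [Algebra F K] {E : Type} [Field E] (σ : K →+* E) (ψ : F →+* E)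
    (hψ : ∀ x, ψ x = σ (algebraMap F K x)) (M5 : Matrix (Fin 5) (Fin 5) F) (i j : Fin 5)
    (τ : K) (a b : Fin 3 → K)
    (h : ∀ k, algebraMap F K (M5 i k) + algebraMap F K (M5 j k) * τ = conv3 a b k) (s t : E) :
    ((M5.map ψ).mulVec (nv s t)) i + ((M5.map ψ).mulVec (nv s t)) j * σ τ
      = ev σ a s t * ev σ b s t := by
  rw [← conv_ev]
  simp only [← h, Matrix.mulVec, dotProduct, Matrix.map_apply, hψ, map_add, map_mul]
  rw [Finset.sum_mul, ← Finset.sum_add_distrib]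
  refine Finset.sum_congr rfl fun k _ => ?_
  ring

lemma row4_ev {F : Type} [Field F] [Algebra F K] {E : Type} [Field E] (σ : K →+* E) (ψ : F →+* E)
    (hψ : ∀ x, ψ x = σ (algebraMap F K x)) (M5 : Matrix (Fin 5) (Fin 5) F) (i : Fin 5)
    (a b : Fin 3 → K)
    (h : ∀ k, algebraMap F K (M5 i k) = conv3 a b k) (s t : E) :
    ((M5.map ψ).mulVec (nv s t)) i = ev σ a s t * ev σ b s t := by
  rw [← conv_ev]
  simp only [← h, Matrix.mulVec, dotProduct, Matrix.map_apply, hψ]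

lemma res_lem (a b c A B C u0 u1 u2 v0 v1 v2 : K) (ha : a ≠ 0)
    (hR : (a * C - c * A) ^ 2 - (a * B - b * A) * (b * C - c * B) ≠ 0)
    (E0 : u0 * A + v0 * a = 0)
    (E1 : u0 * B + u1 * A + (v0 * b + v1 * a) = 0)
    (E2 : u0 * C + u1 * B + u2 * A + (v0 * c + v1 * b + v2 * a) = 0)
    (E3 : u1 * C + u2 * B + (v1 * c + v2 * b) = 0)
    (E4 : u2 * C + v2 * c = 0) :
    ∃ l : K, u0 = l * a ∧ u1 = l * b ∧ u2 = l * c := by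
  obtain ⟨l, rfl⟩ : ∃ l, u0 = l * a := ⟨u0 / a, by field_simp⟩
  obtain ⟨x1, rfl⟩ : ∃ x, u1 = x + l * b := ⟨u1 - l * b, by ring⟩
  obtain ⟨x2, rfl⟩ : ∃ x, u2 = x + l * c := ⟨u2 - l * c, by ring⟩
  obtain ⟨y1, rfl⟩ : ∃ x, v1 = x - l * B := ⟨v1 + l * B, by ring⟩
  obtain ⟨y2, rfl⟩ : ∃ x, v2 = x - l * C := ⟨v2 + l * C, by ring⟩
  have hv0 : v0 = - l * A := mul_right_cancel₀ ha (by linear_combination E0)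
  subst hv0
  have F1 : x1 * A + y1 * a = 0 := by linear_combination E1
  have F2 : x1 * B + x2 * A + y1 * b + y2 * a = 0 := by linear_combination E2
  have F3 : x1 * C + x2 * B + y1 * c + y2 * b = 0 := by linear_combination E3
  have F4 : x2 * C + y2 * c = 0 := by linear_combination E4
  have hx1 : x1 = 0 := by
    have : (a * ((a * C - c * A) ^ 2 - (a * B - b * A) * (b * C - c * B))) * x1 = 0 := by
      linear_combination -((a * C - c * A) * (b * (a * F2 - b * F1) - a * (a * F3 - c * F1))
        - (a * B - b * A) * (c * (a * F2 - b * F1) - a ^ 2 * F4))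
    rcases mul_eq_zero.mp this with h | h
    · exact absurd h (mul_ne_zero ha hR)
    · exact h
  subst hx1
  have hy1 : y1 = 0 := by
    have : y1 * a = 0 := by linear_combination F1
    rcases mul_eq_zero.mp this with h | h
    · exact h
    · exact absurd h ha
  subst hy1
  have hx2 : x2 = 0 := by
    by_contra hx
    apply hR
    have p : a * B - b * A = 0 := by
      apply (mul_eq_zero.mp (?_ : x2 * (a * B - b * A) = 0)).resolve_left hx
      linear_combination a * F3 - b * F2
    have r : a * C - c * A = 0 := by
      apply (mul_eq_zero.mp (?_ : x2 * (a * C - c * A) = 0)).resolve_left hx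
      linear_combination a * F4 - c * F2
    rw [p, r]; ring
  subst hx2
  exact ⟨l, rfl, by ring, by ring⟩

lemma vecMul_zero {M : Matrix (Fin 3) (Fin 3) K} (hM : IsUnit M.det) (x y z : K)
    (h : ∀ j, x * M 0 j + y * M 1 j + z * M 2 j = 0) : x = 0 ∧ y = 0 ∧ z = 0 := by
  have h1 : (![x, y, z] : Fin 3 → K) = 0 := by
    by_contra hne
    refine hM.ne_zero (Matrix.exists_vecMul_eq_zero_iff.mp ⟨_, hne, ?_⟩)
    ext j
    simpa [Matrix.vecMul, dotProduct, Fin.sum_univ_three] using h j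
  exact ⟨by simpa using congrFun h1 0, by simpa using congrFun h1 1, by simpa using congrFun h1 2⟩

lemma rel_det {F : Type} [Field F] [Algebra F K] {M N : Matrix (Fin 3) (Fin 3) K} {τ τ' : K}
    {M5 : Matrix (Fin 5) (Fin 5) F} (hr : Rel F M N τ τ' M5) (fr : K →ₐ[F] K)
    (hτ' : τ ≠ τ') (hfr : fr τ' = τ) (hM : IsUnit M.det)
    (h0 : M 2 0 ≠ 0) (h0' : N 2 0 ≠ 0)
    (hR : (M 2 0 * N 2 2 - M 2 2 * N 2 0) ^ 2 - (M 2 0 * N 2 1 - M 2 1 * N 2 0) *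
      (M 2 1 * N 2 2 - M 2 2 * N 2 1) ≠ 0) : IsUnit M5.det := by
  rw [isUnit_iff_ne_zero]
  intro hdet
  obtain ⟨v, hv, hv0⟩ := Matrix.exists_vecMul_eq_zero_iff.mpr hdet
  apply hv
  have key : ∀ k, algebraMap F K (v 0) * algebraMap F K (M5 0 k)
      + algebraMap F K (v 1) * algebraMap F K (M5 1 k)
      + algebraMap F K (v 2) * algebraMap F K (M5 2 k)
      + algebraMap F K (v 3) * algebraMap F K (M5 3 k)
      + algebraMap F K (v 4) * algebraMap F K (M5 4 k) = 0 := by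
    intro k
    have := congrArg (algebraMap F K) (congrFun hv0 k)
    simpa [Matrix.vecMul, dotProduct, Fin.sum_univ_five] using this
  set w0 := algebraMap F K (v 0) with hw0
  set w1 := algebraMap F K (v 1) with hw1
  set w2 := algebraMap F K (v 2) with hw2
  set w3 := algebraMap F K (v 3) with hw3
  set w4 := algebraMap F K (v 4) with hw4
  have key2 : ∀ k, (w1 - τ' * w0) * conv3 (M 0) (N 2) k + (τ * w0 - w1) * conv3 (N 0) (M 2) k
      + (w3 - τ' * w2) * conv3 (M 1) (N 2) k + (τ * w2 - w3) * conv3 (N 1) (M 2) k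
      + (τ - τ') * w4 * conv3 (M 2) (N 2) k = 0 := by
    intro k
    rw [← hr.h01, ← hr.h01', ← hr.h23, ← hr.h23', ← hr.h4]
    linear_combination (τ - τ') * key k
  obtain ⟨l, hl0, hl1, hl2⟩ := res_lem (M 2 0) (M 2 1) (M 2 2) (N 2 0) (N 2 1) (N 2 2)
    ((w1 - τ' * w0) * M 0 0 + (w3 - τ' * w2) * M 1 0)
    ((w1 - τ' * w0) * M 0 1 + (w3 - τ' * w2) * M 1 1)
    ((w1 - τ' * w0) * M 0 2 + (w3 - τ' * w2) * M 1 2)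
    ((τ * w0 - w1) * N 0 0 + (τ * w2 - w3) * N 1 0 + (τ - τ') * w4 * N 2 0)
    ((τ * w0 - w1) * N 0 1 + (τ * w2 - w3) * N 1 1 + (τ - τ') * w4 * N 2 1)
    ((τ * w0 - w1) * N 0 2 + (τ * w2 - w3) * N 1 2 + (τ - τ') * w4 * N 2 2) h0 hR
    (by have := key2 0; simp [conv3] at this; linear_combination this)
    (by have := key2 1; simp [conv3] at this; linear_combination this)
    (by have := key2 2; simp [conv3] at this; linear_combination this)
    (by have := key2 3; simp [conv3] at this; linear_combination this)
    (by have := key2 4; simp [conv3] at this; linear_combination this)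
  obtain ⟨g0, g1, -⟩ := vecMul_zero hM (w1 - τ' * w0) (w3 - τ' * w2) (-l) (by
    intro j
    fin_cases j
    · simp only [Fin.zero_eta]; linear_combination hl0
    · simp only [Fin.mk_one]; linear_combination hl1
    · simp only [Fin.reduceFinMk]; linear_combination hl2)
  have hz : ∀ x y : F, algebraMap F K y - τ' * algebraMap F K x = 0 →
      algebraMap F K x = 0 ∧ algebraMap F K y = 0 := by
    intro x y hxy
    have h1 := congrArg fr hxy
    simp only [map_sub, map_mul, AlgHom.commutes, hfr, map_zero] at h1
    have h2 : (τ - τ') * algebraMap F K x = 0 := by linear_combination hxy - h1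
    have h3 := (mul_eq_zero.mp h2).resolve_left (sub_ne_zero.mpr hτ')
    exact ⟨h3, by rw [h3] at hxy; simpa using hxy⟩
  obtain ⟨a0, a1⟩ := hz _ _ g0
  obtain ⟨a2, a3⟩ := hz _ _ g1
  have a4 : w4 = 0 := by
    have h4 := key 0
    rw [hr.h4] at h4
    rw [hw0, hw1, hw2, hw3, a0, a1, a2, a3] at h4
    simp [conv3, h0, h0'] at h4
    simpa [hw4] using h4
  have inj : ∀ x : F, algebraMap F K x = 0 → x = 0 := fun x hx =>
    (FaithfulSMul.algebraMap_eq_zero_iff F K).mp hx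
  ext i
  fin_cases i
  · exact inj _ a0
  · exact inj _ a1
  · exact inj _ a2
  · exact inj _ a3
  · exact inj _ a4

def M5mat {F : Type} (c0 c1 : K → F) (M N : Matrix (Fin 3) (Fin 3) K) :
    Matrix (Fin 5) (Fin 5) F :=
  Matrix.of ![fun k => c0 (conv3 (M 0) (N 2) k), fun k => c1 (conv3 (M 0) (N 2) k),
    fun k => c0 (conv3 (M 1) (N 2) k), fun k => c1 (conv3 (M 1) (N 2) k),
    fun k => c0 (conv3 (M 2) (N 2) k)]

lemma coord_unique {F : Type} [Field F] [Algebra F K] {τ : K}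
    (hτF : τ ∉ Set.range (algebraMap F K)) {a b a' b' : F}
    (h : algebraMap F K a + algebraMap F K b * τ = algebraMap F K a' + algebraMap F K b' * τ) :
    a = a' ∧ b = b' := by
  have hb : b = b' := by
    by_contra hne
    apply hτF
    have hne' : algebraMap F K (b - b') ≠ 0 := by
      rw [Ne, FaithfulSMul.algebraMap_eq_zero_iff]; exact sub_ne_zero.mpr hne
    refine ⟨(a' - a) / (b - b'), ?_⟩
    rw [map_div₀, div_eq_iff hne', map_sub, map_sub]
    linear_combination -h
  subst hb
  exact ⟨(algebraMap F K).injective (by linear_combination h), rfl⟩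

lemma rel_M5 {F : Type} [Field F] [Algebra F K] (fr : K →ₐ[F] K)
    (hinv : ∀ x, fr (fr x) = x) (hfix : ∀ x, fr x = x → x ∈ Set.range (algebraMap F K))
    {τ : K} (hτF : τ ∉ Set.range (algebraMap F K)) (c0 c1 : K → F)
    (hc : ∀ x : K, x = algebraMap F K (c0 x) + algebraMap F K (c1 x) * τ)
    (M : Matrix (Fin 3) (Fin 3) K) :
    Rel F M (M.map fr) τ (fr τ) (M5mat c0 c1 M (M.map fr)) := by
  have hcc : ∀ x : K, algebraMap F K (c0 x) + algebraMap F K (c1 x) * fr τ = fr x := by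
    intro x
    have := congrArg fr (hc x)
    simpa using this.symm
  have hcv : ∀ (i : Fin 3) (k : Fin 5),
      fr (conv3 (M i) (M.map fr 2) k) = conv3 (M.map fr i) (M 2) k := by
    intro i k
    fin_cases k <;> simp [conv3, hinv] <;> ring
  refine ⟨fun k => (hc _).symm, fun k => ?_, fun k => (hc _).symm, fun k => ?_, fun k => ?_⟩
  · exact (hcc _).trans (hcv 0 k)
  · exact (hcc _).trans (hcv 1 k)
  · have h2 : fr (conv3 (M 2) (M.map fr 2) k) = conv3 (M 2) (M.map fr 2) k := by
      rw [hcv]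
      fin_cases k <;> simp [conv3] <;> ring
    obtain ⟨y, hy⟩ := hfix _ h2
    have h3 := hc (conv3 (M 2) (M.map fr 2) k)
    have h4 : algebraMap F K y + algebraMap F K 0 * τ =
        algebraMap F K (c0 (conv3 (M 2) (M.map fr 2) k)) +
        algebraMap F K (c1 (conv3 (M 2) (M.map fr 2) k)) * τ := by
      rw [← h3, hy]; simp
    have h5 := (coord_unique hτF h4).1
    show algebraMap F K (c0 (conv3 (M 2) (M.map fr 2) k)) = _
    rw [← h5, hy]

lemma res_ne {F : Type} [Field F] [Algebra F K] (fr : K →ₐ[F] K)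
    (hinv : ∀ x, fr (fr x) = x) (hfix : ∀ x, fr x = x → x ∈ Set.range (algebraMap F K))
    (a b c : K)
    (hC : ∀ s t : F, (s ≠ 0 ∨ t ≠ 0) → a * algebraMap F K s ^ 2 +
      b * (algebraMap F K s * algebraMap F K t) + c * algebraMap F K t ^ 2 ≠ 0)
    (hB : ¬ ∃ y z : F, b = a * algebraMap F K y ∧ c = a * algebraMap F K z) :
    (a * fr c - c * fr a) ^ 2 - (a * fr b - b * fr a) * (b * fr c - c * fr b) ≠ 0 := by
  intro hR
  have ha : a ≠ 0 := by simpa using hC 1 0 (Or.inl one_ne_zero)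
  have hA : fr a ≠ 0 := by simpa using ha
  by_cases hp : a * fr b - b * fr a = 0
  · have hr : a * fr c - c * fr a = 0 := by
      rw [hp] at hR; simpa using hR
    apply hB
    obtain ⟨y, hy⟩ := hfix (b / a) (by
      rw [map_div₀, div_eq_div_iff hA ha]; linear_combination hp)
    obtain ⟨z, hz⟩ := hfix (c / a) (by
      rw [map_div₀, div_eq_div_iff hA ha]; linear_combination hr)
    exact ⟨y, z, by rw [hy]; field_simp, by rw [hz]; field_simp⟩
  · obtain ⟨k, hk⟩ := hfix (-(a * fr c - c * fr a) / (a * fr b - b * fr a)) (by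
      have : fr (a * fr b - b * fr a) ≠ 0 := (map_ne_zero fr).mpr hp
      rw [map_div₀, div_eq_div_iff this hp]
      simp only [map_neg, map_sub, map_mul, hinv]
      ring)
    apply hC k 1 (Or.inr one_ne_zero)
    have h1 : algebraMap F K k * (a * fr b - b * fr a) = -(a * fr c - c * fr a) := by
      rw [hk, div_mul_cancel₀ _ hp]
    have h2 : (a * algebraMap F K k ^ 2 + b * (algebraMap F K k * algebraMap F K 1) +
        c * algebraMap F K 1 ^ 2) * (a * fr b - b * fr a) ^ 2 = 0 := by
      have e : (a * algebraMap F K k ^ 2 + b * (algebraMap F K k * algebraMap F K 1) +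
        c * algebraMap F K 1 ^ 2) * (a * fr b - b * fr a) ^ 2 =
        a * (algebraMap F K k * (a * fr b - b * fr a)) ^ 2 +
        b * (algebraMap F K k * (a * fr b - b * fr a)) * (a * fr b - b * fr a) +
        c * (a * fr b - b * fr a) ^ 2 := by rw [map_one]; ring
      rw [e, h1]
      linear_combination a * hR
    exact (mul_eq_zero.mp h2).resolve_right (pow_ne_zero _ hp)

lemma root_L {L : Type} [Field L] [Fintype K] [Fintype L] [Algebra K L]
    (hcard : Fintype.card L = Fintype.card K ^ 2) (a b c : K) (hc : c ≠ 0)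
    (hno : ∀ x : K, a + b * x + c * x ^ 2 ≠ 0) :
    ∃ θ : L, algebraMap K L a + algebraMap K L b * θ + algebraMap K L c * θ ^ 2 = 0 := by
  let f : Polynomial K := Polynomial.C c * Polynomial.X ^ 2 + Polynomial.C b * Polynomial.X
    + Polynomial.C a
  have hdeg : f.natDegree = 2 := Polynomial.natDegree_quadratic hc
  have hf0 : f ≠ 0 := by intro h; rw [h] at hdeg; simp at hdeg
  have hirr : Irreducible f := by
    rw [Polynomial.irreducible_iff_roots_eq_zero_of_degree_le_three (by omega) (by omega)]
    rw [Multiset.eq_zero_iff_forall_notMem]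
    intro x hx
    have h1 := (Polynomial.mem_roots hf0).mp hx
    apply hno x
    have h2 : f.eval x = 0 := h1
    simp [f] at h2
    linear_combination h2
  have := Fact.mk hirr
  have hfin : Module.finrank K (AdjoinRoot f) = 2 := by
    rw [(AdjoinRoot.powerBasis hf0).finrank, AdjoinRoot.powerBasis_dim, hdeg]
  have hfinL : Module.finrank K L = 2 := by
    have h1 := Module.card_eq_pow_finrank (K := K) (V := L)
    rw [hcard] at h1
    exact (Nat.pow_right_injective (Fintype.one_lt_card (α := K)) h1).symm
  have : Module.Finite K (AdjoinRoot f) := Module.finite_of_finrank_pos (by omega)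
  have : Finite (AdjoinRoot f) := Module.finite_of_finite K
  obtain ⟨φ⟩ := FiniteField.nonempty_algHom_of_finrank_dvd (F := K) (K := AdjoinRoot f) (L := L)
    (by rw [hfin, hfinL])
  refine ⟨φ (AdjoinRoot.root f), ?_⟩
  have h1 : Polynomial.aeval (AdjoinRoot.root f) f = 0 := by
    rw [AdjoinRoot.aeval_eq, AdjoinRoot.mk_self]
  have h2 : Polynomial.aeval (φ (AdjoinRoot.root f)) f = 0 := by
    rw [Polynomial.aeval_algHom_apply, h1, map_zero]
  have h3 : ∀ y : L, Polynomial.aeval y f = algebraMap K L c * y ^ 2 + algebraMap K L b * y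
      + algebraMap K L a := by intro y; simp [f]
  rw [h3] at h2
  linear_combination h2

lemma two_roots_L {L : Type} [Field L] [Fintype K] [Fintype L] [Algebra K L]
    (hcard : Fintype.card L = Fintype.card K ^ 2) (a b c : K) (hc : c ≠ 0)
    (hno : ∀ x : K, a + b * x + c * x ^ 2 ≠ 0) :
    ∃ θ θ' : L, θ ≠ θ' ∧ ∀ x, algebraMap K L a + algebraMap K L b * x + algebraMap K L c * x ^ 2 = 0
      ↔ (x = θ ∨ x = θ') := by
  obtain ⟨θ, h⟩ := root_L (L := L) hcard a b c hc hno
  have h' := congrArg (FiniteField.frobeniusAlgHom K L) h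
  simp only [map_add, map_mul, map_pow, AlgHom.commutes, map_zero] at h'
  set θ' := FiniteField.frobeniusAlgHom K L θ with hθ'
  have hc' : algebraMap K L c ≠ 0 := by rwa [Ne, FaithfulSMul.algebraMap_eq_zero_iff]
  have hne : θ ≠ θ' := by
    intro he
    obtain ⟨x, hx⟩ := fixed_mem_range (F := K) θ he.symm
    apply hno x
    apply (algebraMap K L).injective
    rw [← hx] at h
    simpa using h
  refine ⟨θ, θ', hne, fun x => ⟨fun hx => ?_, ?_⟩⟩
  · by_contra hcon
    push Not at hcon
    have h1 : (θ - θ') * (algebraMap K L b + algebraMap K L c * (θ + θ')) = 0 := by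
      linear_combination h - h'
    have h2 := (mul_eq_zero.mp h1).resolve_left (sub_ne_zero.mpr hne)
    have h3 : algebraMap K L c * ((x - θ) * (x - θ')) = 0 := by
      linear_combination hx - h - (x - θ) * h2
    simp [hc', sub_eq_zero, hcon.1, hcon.2] at h3
  · rintro (rfl | rfl)
    · exact h
    · exact h'

lemma mk_mem_projPt {v w : Fin n → K} {hv : v ≠ 0}
    (h : Projectivization.mk K v hv ∈ projPt w) : ∃ a : K, a ≠ 0 ∧ v = a • w := by
  obtain ⟨hw, h⟩ := h
  rw [Projectivization.mk_eq_mk_iff'] at h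
  obtain ⟨a, ha⟩ := h
  refine ⟨a, ?_, ha.symm⟩
  rintro rfl
  apply hv; rw [← ha]; simp

lemma mk_mem_projPt_of {v w : Fin n → K} {hv : v ≠ 0} {a : K}
    (h : v = a • w) : Projectivization.mk K v hv ∈ projPt w := by
  have hw : w ≠ 0 := by rintro rfl; apply hv; rw [h]; simp
  refine ⟨hw, ?_⟩
  rw [Projectivization.mk_eq_mk_iff']
  exact ⟨a, h.symm⟩

lemma mem_conic_iff (M : Matrix (Fin 3) (Fin 3) K) (hM : IsUnit M.det) (u : Fin 3 → K)
    (hv : M.mulVec u ≠ 0) :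
    Projectivization.mk K (M.mulVec u) hv ∈ mimg M (conicVecs (Set.univ : Set K)) ↔
      u 1 ^ 2 = u 0 * u 2 := by
  rw [mem_mimg_conic_univ]
  constructor
  · rintro ⟨s, t, hst, h⟩
    obtain ⟨a, ha, h⟩ := mk_mem_projPt h
    rw [← Matrix.mulVec_smul] at h
    have h := mulVec_inj M hM h
    rw [h]
    simp [cv]
    ring
  · intro hu
    by_cases h0 : u 0 = 0
    · have h1 : u 1 = 0 := by rw [h0] at hu; simpa using hu
      refine ⟨0, 1, Or.inr one_ne_zero, mk_mem_projPt_of (a := u 2) ?_⟩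
      rw [← Matrix.mulVec_smul]
      congr 1
      ext i; fin_cases i <;> simp [cv, h0, h1]
    · refine ⟨u 0, u 1, Or.inl h0, mk_mem_projPt_of (a := (u 0)⁻¹) ?_⟩
      rw [← Matrix.mulVec_smul]
      congr 1
      ext i; fin_cases i <;> simp [cv]
      · field_simp
      · field_simp
      · rw [hu]; field_simp

lemma five_roots {F : Type} [Field F] [Fintype F] [Algebra F K] (hF : 5 ≤ Fintype.card F)
    (k0 k1 k2 k3 k4 : K)
    (h : ∀ x : F, k0 + k1 * algebraMap F K x + k2 * algebraMap F K x ^ 2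
      + k3 * algebraMap F K x ^ 3 + k4 * algebraMap F K x ^ 4 = 0) :
    k0 = 0 ∧ k1 = 0 ∧ k2 = 0 ∧ k3 = 0 ∧ k4 = 0 := by
  let f : Polynomial K := Polynomial.C k0 + Polynomial.C k1 * Polynomial.X
    + Polynomial.C k2 * Polynomial.X ^ 2 + Polynomial.C k3 * Polynomial.X ^ 3
    + Polynomial.C k4 * Polynomial.X ^ 4
  have hd : f.natDegree ≤ 4 := by
    simp only [f]; compute_degree
  have hf : f = 0 := by
    refine Polynomial.eq_zero_of_natDegree_lt_card_of_eval_eq_zero f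
      (f := algebraMap F K) (algebraMap F K).injective (fun x => ?_) (by omega)
    simpa [f] using h x
  have hco : ∀ k, f.coeff k = 0 := by intro k; rw [hf]; simp
  refine ⟨?_, ?_, ?_, ?_, ?_⟩
  · simpa [f, Polynomial.coeff_X, Polynomial.coeff_C, Polynomial.coeff_X_pow] using hco 0
  · simpa [f, Polynomial.coeff_X, Polynomial.coeff_C, Polynomial.coeff_X_pow] using hco 1
  · simpa [f, Polynomial.coeff_X, Polynomial.coeff_C, Polynomial.coeff_X_pow] using hco 2
  · simpa [f, Polynomial.coeff_X, Polynomial.coeff_C, Polynomial.coeff_X_pow] using hco 3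
  · simpa [f, Polynomial.coeff_X, Polynomial.coeff_C, Polynomial.coeff_X_pow] using hco 4

lemma conic_unique {F : Type} [Field F] [Fintype F] [Algebra F K] (hF : 5 ≤ Fintype.card F)
    (M D : Matrix (Fin 3) (Fin 3) K) (hM : IsUnit M.det) (hD : IsUnit D.det)
    (h : mimg M (conicVecs (Set.range (algebraMap F K))) ⊆ mimg D (conicVecs (Set.univ : Set K))) :
    mimg D (conicVecs (Set.univ : Set K)) = mimg M (conicVecs (Set.univ : Set K)) := by
  obtain ⟨P, hP⟩ : ∃ P : Matrix (Fin 3) (Fin 3) K, D * P = M :=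
    ⟨D⁻¹ * M, by rw [← Matrix.mul_assoc, Matrix.mul_nonsing_inv D hD, Matrix.one_mul]⟩
  have hPu : IsUnit P.det := by
    have := congrArg Matrix.det hP
    rw [Matrix.det_mul] at this
    rw [← this] at hM
    exact isUnit_of_mul_isUnit_right hM
  have hMD : ∀ v, M.mulVec v = D.mulVec (P.mulVec v) := by
    intro v; rw [Matrix.mulVec_mulVec, hP]
  have hc : ∀ s t : F, (s ≠ 0 ∨ t ≠ 0) →
      (P.mulVec (cv (algebraMap F K s) (algebraMap F K t)) 1) ^ 2 =
      P.mulVec (cv (algebraMap F K s) (algebraMap F K t)) 0 *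
      P.mulVec (cv (algebraMap F K s) (algebraMap F K t)) 2 := by
    intro s t hst
    have hne : cv (algebraMap F K s) (algebraMap F K t) ≠ 0 := cv_ne (by simpa using hst)
    have hne' := mulVec_ne hD (mulVec_ne hPu hne)
    rw [← mem_conic_iff D hD _ hne']
    apply h
    rw [mem_mimg_conic]
    refine ⟨s, t, hst, mk_mem_projPt_of (a := 1) ?_⟩
    rw [one_smul, hMD]
  obtain ⟨e0, e1, e2, e3, e4⟩ := five_roots (F := F) hF
    (P 1 0 ^ 2 - P 0 0 * P 2 0)
    (2 * P 1 0 * P 1 1 - P 0 0 * P 2 1 - P 0 1 * P 2 0)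
    (P 1 1 ^ 2 + 2 * P 1 0 * P 1 2 - P 0 0 * P 2 2 - P 0 1 * P 2 1 - P 0 2 * P 2 0)
    (2 * P 1 1 * P 1 2 - P 0 1 * P 2 2 - P 0 2 * P 2 1)
    (P 1 2 ^ 2 - P 0 2 * P 2 2) (by
      intro x
      have := hc 1 x (Or.inl one_ne_zero)
      simp [Matrix.mulVec, dotProduct, Fin.sum_univ_three, cv] at this
      linear_combination this)
  have hQ : ∀ u : Fin 3 → K, (P.mulVec u 1) ^ 2 - P.mulVec u 0 * P.mulVec u 2 =
      (P 1 1 ^ 2 - P 0 1 * P 2 1) * (u 1 ^ 2 - u 0 * u 2) := by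
    intro u
    simp only [Matrix.mulVec, dotProduct, Fin.sum_univ_three]
    linear_combination (u 0) ^ 2 * e0 + u 0 * u 1 * e1 + u 0 * u 2 * e2 + u 1 * u 2 * e3
      + u 2 ^ 2 * e4
  have hne : P 1 1 ^ 2 - P 0 1 * P 2 1 ≠ 0 := by
    intro h0
    have h1 := hQ (P⁻¹.mulVec ![0, 1, 0])
    rw [Matrix.mulVec_mulVec, Matrix.mul_nonsing_inv P hPu, Matrix.one_mulVec, h0] at h1
    simp at h1
  ext p
  induction p using Projectivization.ind with
  | h v hv =>
    obtain ⟨u, rfl⟩ : ∃ u, M.mulVec u = v :=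
      ⟨M⁻¹.mulVec v, by rw [Matrix.mulVec_mulVec, Matrix.mul_nonsing_inv M hM, Matrix.one_mulVec]⟩
    rw [mem_conic_iff M hM]
    have hv' := hv
    rw [hMD] at hv'
    have e : Projectivization.mk K (M.mulVec u) hv
        = Projectivization.mk K (D.mulVec (P.mulVec u)) hv' := by
      congr 1; exact hMD u
    rw [e, mem_conic_iff D hD, ← sub_eq_zero, hQ, mul_eq_zero, or_iff_right hne, sub_eq_zero]

lemma baer_lem {F : Type} [Field F] [Fintype F] [Algebra F K] (hF : 5 ≤ Fintype.card F)
    (M N : Matrix (Fin 3) (Fin 3) K) (hM : IsUnit M.det) (hN : IsUnit N.det)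
    (h : mimg M (conicVecs (Set.range (algebraMap F K))) ⊆ mimg N (subplaneVecs F K))
    (u : Fin 3 → F) (hu : M.mulVec (algVec F u) ≠ 0) :
    Projectivization.mk K (M.mulVec (algVec F u)) hu ∈ mimg N (subplaneVecs F K) := by
  obtain ⟨θ, hθ⟩ : ∃ θ : F, θ ∉ ({0, 1} : Finset F) := by
    by_contra hcon
    push Not at hcon
    have h1 : (Finset.univ : Finset F) ⊆ {0, 1} := fun x _ => hcon x
    have h2 := Finset.card_le_card h1
    have h3 := Finset.card_le_two (a := (0 : F)) (b := 1)
    rw [Finset.card_univ] at h2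
    omega
  simp only [Finset.mem_insert, Finset.mem_singleton, not_or] at hθ
  obtain ⟨hθ0, hθ1⟩ := hθ
  have hpt : ∀ s t : F, (s ≠ 0 ∨ t ≠ 0) → ∃ (l : K) (f : Fin 3 → F), l ≠ 0 ∧
      M.mulVec (cv (algebraMap F K s) (algebraMap F K t)) = l • N.mulVec (algVec F f) := by
    intro s t hst
    have hne : cv (algebraMap F K s) (algebraMap F K t) ≠ 0 := cv_ne (by simpa using hst)
    have hne' := mulVec_ne hM hne
    have h1 : Projectivization.mk K _ hne' ∈ mimg N (subplaneVecs F K) := by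
      apply h
      rw [mem_mimg_conic]
      exact ⟨s, t, hst, mk_mem_projPt_of (a := 1) (by rw [one_smul])⟩
    obtain ⟨_, ⟨f, -, rfl⟩, hf⟩ := h1
    obtain ⟨a, ha, h2⟩ := mk_mem_projPt hf
    exact ⟨a, f, ha, h2⟩
  obtain ⟨l, f1, hl, e1⟩ := hpt 1 0 (Or.inl one_ne_zero)
  obtain ⟨μ, f3, hμ, e3⟩ := hpt 0 1 (Or.inr one_ne_zero)
  obtain ⟨ν, f, hν, e2⟩ := hpt 1 1 (Or.inr one_ne_zero)
  obtain ⟨ρ, g, hρ, eg⟩ := hpt 1 θ (Or.inl one_ne_zero)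
  simp only [← Matrix.mulVec_smul] at e1 e2 e3 eg
  -- independence
  have hind : ∀ x y z : K, x • algVec F f1 + y • algVec F f3 + z • algVec F f = (0 : Fin 3 → K) →
      x = 0 ∧ y = 0 ∧ z = 0 := by
    intro x y z hxyz
    have h1 : M.mulVec ((x / l) • cv (algebraMap F K 1) (algebraMap F K 0)
        + (y / μ) • cv (algebraMap F K 0) (algebraMap F K 1)
        + (z / ν) • cv (algebraMap F K 1) (algebraMap F K 1)) = M.mulVec 0 := by
      rw [Matrix.mulVec_add, Matrix.mulVec_add, Matrix.mulVec_smul, Matrix.mulVec_smul,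
        Matrix.mulVec_smul, e1, e2, e3, ← Matrix.mulVec_smul, ← Matrix.mulVec_smul,
        ← Matrix.mulVec_smul, ← Matrix.mulVec_add, ← Matrix.mulVec_add, smul_smul, smul_smul,
        smul_smul, div_mul_cancel₀ _ hl, div_mul_cancel₀ _ hμ, div_mul_cancel₀ _ hν, hxyz,
        Matrix.mulVec_zero, Matrix.mulVec_zero]
    have h2 := mulVec_inj M hM h1
    have a0 := congrFun h2 0
    have a1 := congrFun h2 1
    have a2 := congrFun h2 2
    simp [cv] at a0 a1 a2
    have hz : z = 0 := a1.resolve_right hν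
    subst hz
    simp [hl, hμ] at a0 a2
    exact ⟨a0, a2, rfl⟩
  let G : Matrix (Fin 3) (Fin 3) F := Matrix.of fun i => ![f1 i, f3 i, f i]
  have hG : IsUnit G.det := by
    rw [isUnit_iff_ne_zero]
    intro h0
    obtain ⟨v, hv, hv0⟩ := Matrix.exists_mulVec_eq_zero_iff.mpr h0
    obtain ⟨x0, x1, x2⟩ := hind (algebraMap F K (v 0)) (algebraMap F K (v 1))
      (algebraMap F K (v 2)) (by
        ext i
        have := congrArg (algebraMap F K) (congrFun hv0 i)
        simp [Matrix.mulVec, dotProduct, Fin.sum_univ_three, G] at this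
        simp only [algVec, Pi.add_apply, Pi.smul_apply, smul_eq_mul, Pi.zero_apply]
        linear_combination this)
    apply hv
    simp at x0 x1 x2
    ext i; fin_cases i <;> simp [x0, x1, x2]
  obtain ⟨k, hk⟩ : ∃ k : Fin 3 → F, G.mulVec k = g :=
    ⟨G⁻¹.mulVec g, by rw [Matrix.mulVec_mulVec, Matrix.mul_nonsing_inv G hG, Matrix.one_mulVec]⟩
  have hk' : ∀ i, algebraMap F K (g i) = algebraMap F K (k 0) * algebraMap F K (f1 i)
      + algebraMap F K (k 1) * algebraMap F K (f3 i)
      + algebraMap F K (k 2) * algebraMap F K (f i) := by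
    intro i
    rw [← hk]
    simp [Matrix.mulVec, dotProduct, Fin.sum_univ_three, G]
    ring
  obtain ⟨T, hT⟩ : ∃ T, T = algebraMap F K θ := ⟨_, rfl⟩
  rw [← hT] at eg
  have hg2 : (ρ • algVec F g : Fin 3 → K) = ((1 - T) * l) • algVec F f1 + ((T ^ 2 - T) * μ) • algVec F f3
      + (T * ν) • algVec F f := by
    apply mulVec_inj N hN
    rw [← eg, Matrix.mulVec_add, Matrix.mulVec_add, mul_smul, mul_smul, mul_smul,
      Matrix.mulVec_smul, Matrix.mulVec_smul _ _ (μ • _), Matrix.mulVec_smul _ _ (ν • _),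
      ← e1, ← e2, ← e3, ← Matrix.mulVec_smul, ← Matrix.mulVec_smul, ← Matrix.mulVec_smul,
      ← Matrix.mulVec_add, ← Matrix.mulVec_add]
    congr 1
    ext i; fin_cases i <;> simp [cv]
  obtain ⟨b0, b1, b2⟩ := hind ((1 - T) * l - ρ * algebraMap F K (k 0))
    ((T ^ 2 - T) * μ - ρ * algebraMap F K (k 1)) (T * ν - ρ * algebraMap F K (k 2)) (by
      ext i
      have h1 := congrFun hg2 i
      simp only [algVec, Pi.add_apply, Pi.smul_apply, smul_eq_mul, Pi.zero_apply] at h1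
      rw [hk'] at h1
      simp only [algVec, Pi.add_apply, Pi.smul_apply, smul_eq_mul, Pi.zero_apply]
      linear_combination -h1)
  have hT0 : T ≠ 0 := by rw [hT, Ne, FaithfulSMul.algebraMap_eq_zero_iff]; exact hθ0
  have hT1 : 1 - T ≠ 0 := by
    rw [hT, ← map_one (algebraMap F K), ← map_sub, Ne, FaithfulSMul.algebraMap_eq_zero_iff]
    exact sub_ne_zero.mpr (Ne.symm hθ1)
  have hT2 : T ^ 2 - T ≠ 0 := by
    have : T ^ 2 - T = - (T * (1 - T)) := by ring
    rw [this]; exact neg_ne_zero.mpr (mul_ne_zero hT0 hT1)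
  have hl' : l = ρ * algebraMap F K (k 0 / (1 - θ)) := by
    rw [map_div₀, map_sub, map_one, ← hT, mul_div_assoc', eq_div_iff hT1]
    linear_combination b0
  have hμ' : μ = ρ * algebraMap F K (k 1 / (θ ^ 2 - θ)) := by
    rw [map_div₀, map_sub, map_pow, ← hT, mul_div_assoc', eq_div_iff hT2]
    linear_combination b1
  have hν' : ν = ρ * algebraMap F K (k 2 / θ) := by
    rw [map_div₀, ← hT, mul_div_assoc', eq_div_iff hT0]
    linear_combination b2
  let w : Fin 3 → F := fun i => (u 0 - u 1) * (k 0 / (1 - θ)) * f1 i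
    + (u 2 - u 1) * (k 1 / (θ ^ 2 - θ)) * f3 i + u 1 * (k 2 / θ) * f i
  have hw : M.mulVec (algVec F u) = ρ • N.mulVec (algVec F w) := by
    have h1 : (algVec F u : Fin 3 → K) =
        (algebraMap F K (u 0 - u 1)) • cv (algebraMap F K 1) (algebraMap F K 0)
        + (algebraMap F K (u 2 - u 1)) • cv (algebraMap F K 0) (algebraMap F K 1)
        + (algebraMap F K (u 1)) • cv (algebraMap F K 1) (algebraMap F K 1) := by
      ext i; fin_cases i <;> simp [cv, algVec, Algebra.smul_def]
    rw [h1, Matrix.mulVec_add, Matrix.mulVec_add, Matrix.mulVec_smul, Matrix.mulVec_smul,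
        Matrix.mulVec_smul, e1, e2, e3, ← Matrix.mulVec_smul, ← Matrix.mulVec_smul,
        ← Matrix.mulVec_smul, ← Matrix.mulVec_smul, ← Matrix.mulVec_add, ← Matrix.mulVec_add]
    congr 1
    ext i
    simp only [Pi.add_apply, Pi.smul_apply, smul_eq_mul, algVec, w, map_add, map_mul]
    rw [hl', hμ', hν']
    ring
  refine ⟨algVec F w, ⟨w, ?_, rfl⟩, mk_mem_projPt_of hw⟩
  intro h0
  apply hu
  rw [hw, h0]
  have : (algVec F (0 : Fin 3 → F) : Fin 3 → K) = 0 := by ext i; simp [algVec]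
  rw [this]; simp

lemma mem_span_g {E : Type} [Field E] (σ : K →+* E) (τ : K) (q : ℕ) (v : Fin 5 → E) :
    v ∈ Submodule.span E {mapVec σ (A0v τ q), mapVec σ (A1v τ q)} ↔
      v 0 + v 1 * σ (τ ^ q) = 0 ∧ v 2 + v 3 * σ (τ ^ q) = 0 ∧ v 4 = 0 := by
  rw [Submodule.mem_span_pair]
  constructor
  · rintro ⟨a, b, rfl⟩
    simp [mapVec, A0v, A1v]
  · rintro ⟨h0, h2, h4⟩
    refine ⟨-v 1, -v 3, ?_⟩
    ext i
    fin_cases i <;> simp [mapVec, A0v, A1v, h4]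
    · simp only [map_pow] at h0; linear_combination -h0
    · simp only [map_pow] at h2; linear_combination -h2

lemma mem_span_gq {E : Type} [Field E] (σ : K →+* E) (τ : K) (v : Fin 5 → E)
    (h0 : v 0 + v 1 * σ τ = 0) (h2 : v 2 + v 3 * σ τ = 0) (h4 : v 4 = 0) :
    v ∈ Submodule.span E {mapVec σ (B0v τ), mapVec σ (B1v τ)} := by
  rw [Submodule.mem_span_pair]
  refine ⟨-v 1, -v 3, ?_⟩
  ext i
  fin_cases i <;> simp [mapVec, B0v, B1v, h4]
  · linear_combination -h0
  · linear_combination -h2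

lemma gptVec_eq (τ : K) (q : ℕ) (t : Option K) :
    gptVec τ q t = ![ptInfVec t 0 * τ ^ q, -ptInfVec t 0, ptInfVec t 1 * τ ^ q, -ptInfVec t 1, 0] := by
  cases t with
  | none => ext i; fin_cases i <;> simp [gptVec, ptInfVec, A0v]
  | some δ => ext i; fin_cases i <;> simp [gptVec, ptInfVec, A0v, A1v]

lemma ptInfVec_two (t : Option K) : ptInfVec t 2 = 0 := by
  cases t <;> simp [ptInfVec]

/-- common data: the relations plus embeddings -/
structure Dat (F : Type) [Field F] [Algebra F K] {E : Type} [Field E] (σ : K →+* E) (ψ : F →+* E)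
    (M N : Matrix (Fin 3) (Fin 3) K) (τ : K) (q : ℕ) (M5 : Matrix (Fin 5) (Fin 5) F) : Prop where
  hr : Rel F M N τ (τ ^ q) M5
  hψ : ∀ x, ψ x = σ (algebraMap F K x)
  hM : IsUnit M.det
  hN : IsUnit N.det
  h5 : IsUnit M5.det
  hτ : τ ≠ τ ^ q

section dat
variable {F : Type} [Field F] [Algebra F K] {E : Type} [Field E] {σ : K →+* E} {ψ : F →+* E}
    {M N : Matrix (Fin 3) (Fin 3) K} {τ : K} {q : ℕ} {M5 : Matrix (Fin 5) (Fin 5) F}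

lemma Dat.e01 (d : Dat F σ ψ M N τ q M5) (s t : E) :
    ((M5.map ψ).mulVec (nv s t)) 0 + ((M5.map ψ).mulVec (nv s t)) 1 * σ τ
      = ev σ (M 0) s t * ev σ (N 2) s t := row_ev σ ψ d.hψ M5 0 1 τ _ _ d.hr.h01 s t
lemma Dat.e01q (d : Dat F σ ψ M N τ q M5) (s t : E) :
    ((M5.map ψ).mulVec (nv s t)) 0 + ((M5.map ψ).mulVec (nv s t)) 1 * σ (τ ^ q)
      = ev σ (N 0) s t * ev σ (M 2) s t := row_ev σ ψ d.hψ M5 0 1 _ _ _ d.hr.h01' s t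
lemma Dat.e23 (d : Dat F σ ψ M N τ q M5) (s t : E) :
    ((M5.map ψ).mulVec (nv s t)) 2 + ((M5.map ψ).mulVec (nv s t)) 3 * σ τ
      = ev σ (M 1) s t * ev σ (N 2) s t := row_ev σ ψ d.hψ M5 2 3 τ _ _ d.hr.h23 s t
lemma Dat.e23q (d : Dat F σ ψ M N τ q M5) (s t : E) :
    ((M5.map ψ).mulVec (nv s t)) 2 + ((M5.map ψ).mulVec (nv s t)) 3 * σ (τ ^ q)
      = ev σ (N 1) s t * ev σ (M 2) s t := row_ev σ ψ d.hψ M5 2 3 _ _ _ d.hr.h23' s t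
lemma Dat.e4 (d : Dat F σ ψ M N τ q M5) (s t : E) :
    ((M5.map ψ).mulVec (nv s t)) 4 = ev σ (M 2) s t * ev σ (N 2) s t :=
  row4_ev σ ψ d.hψ M5 4 _ _ d.hr.h4 s t

lemma Dat.ne (d : Dat F σ ψ M N τ q M5) {s t : E} (h : s ≠ 0 ∨ t ≠ 0) :
    (M5.map ψ).mulVec (nv s t) ≠ 0 := mulVec_ne (map_det_unit d.h5 ψ) (nv_ne h)

lemma Dat.inf (d : Dat F σ ψ M N τ q M5) (p : PP E 5)
    (hp : p ∈ mimg (M5.map ψ) (nrcVecs (Set.univ : Set E))) (hs : p ∈ sinf E) :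
    p ∈ glineL σ τ q ∪ gqlineL σ τ := by
  rw [mem_mimg_nrc] at hp
  obtain ⟨s, t, hst, hne, rfl⟩ := hp
  rw [mk_mem_sinf, d.e4, mul_eq_zero] at hs
  rcases hs with hs | hs
  · left
    unfold glineL
    rw [mk_mem_ptsOf, mem_span_g, d.e01q, d.e23q, d.e4, hs]
    simp
  · right
    unfold gqlineL
    rw [mk_mem_ptsOf]
    apply mem_span_gq
    · rw [d.e01, hs, mul_zero]
    · rw [d.e23, hs, mul_zero]
    · rw [d.e4, hs, mul_zero]

lemma Dat.g_iff (d : Dat F σ ψ M N τ q M5) {s t : E} (h : s ≠ 0 ∨ t ≠ 0) :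
    (M5.map ψ).mulVec (nv s t) ∈ Submodule.span E {mapVec σ (A0v τ q), mapVec σ (A1v τ q)}
      ↔ ev σ (M 2) s t = 0 := by
  rw [mem_span_g, d.e01q, d.e23q, d.e4]
  constructor
  · rintro ⟨h0, h1, h2⟩
    by_contra hz
    apply mulVec_ne (map_det_unit d.hN σ) (cv_ne h)
    ext i
    rw [mulVec_cv]
    fin_cases i
    · simpa [hz] using h0
    · simpa [hz] using h1
    · simpa [hz] using h2
  · intro hz
    simp [hz]

lemma Dat.zbar (d : Dat F σ ψ M N τ q M5) {s t : E} (h : s ≠ 0 ∨ t ≠ 0)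
    (hz : ev σ (M 2) s t = 0) : ev σ (N 2) s t ≠ 0 := by
  intro hz'
  have a0 := d.e01 s t
  have a1 := d.e01q s t
  have a2 := d.e23 s t
  have a3 := d.e23q s t
  have a4 := d.e4 s t
  have hd : σ τ - σ (τ ^ q) ≠ 0 := sub_ne_zero.mpr fun h => d.hτ (σ.injective h)
  rw [hz] at a1 a3 a4
  rw [hz'] at a0 a2
  apply d.ne h
  generalize (M5.map ψ).mulVec (nv s t) = v at *
  have v1 : v 1 = 0 := by
    apply (mul_eq_zero.mp _).resolve_right hd
    linear_combination a0 - a1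
  have v3 : v 3 = 0 := by
    apply (mul_eq_zero.mp _).resolve_right hd
    linear_combination a2 - a3
  rw [v1] at a0
  rw [v3] at a2
  ext i
  fin_cases i
  · simpa using a0
  · exact v1
  · simpa using a2
  · exact v3
  · simpa using a4

lemma Dat.gpt_iff (d : Dat F σ ψ M N τ q M5) {s u : E} (h : s ≠ 0 ∨ u ≠ 0) (t : Option K) :
    (∃ c : E, (M5.map ψ).mulVec (nv s u) = c • mapVec σ (gptVec τ q t)) ↔
      ∃ k : E, (M.map σ).mulVec (cv s u) = k • mapVec σ (ptInfVec t) := by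
  have a0 := d.e01 s u
  have a1 := d.e01q s u
  have a2 := d.e23 s u
  have a3 := d.e23q s u
  have a4 := d.e4 s u
  have hd : σ τ - σ (τ ^ q) ≠ 0 := sub_ne_zero.mpr fun h => d.hτ (σ.injective h)
  have hpt := gptVec_eq τ q t
  have hp2 := ptInfVec_two t
  constructor
  · rintro ⟨c, hc⟩
    have hz : ev σ (M 2) s u = 0 := by
      rw [← d.g_iff h, mem_span_g, hc, hpt]
      refine ⟨?_, ?_, ?_⟩ <;> simp [mapVec] <;> ring
    have hz' := d.zbar h hz
    rw [hz] at a1 a3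
    rw [hc, hpt] at a0 a1 a2 a3
    refine ⟨-c * (σ τ - σ (τ ^ q)) / ev σ (N 2) s u, ?_⟩
    ext i
    rw [mulVec_cv]
    simp [mapVec] at a0 a1 a2 a3
    fin_cases i <;> simp [mapVec]
    · rw [div_mul_eq_mul_div, eq_div_iff hz']
      linear_combination -a0 
    · rw [div_mul_eq_mul_div, eq_div_iff hz']
      linear_combination -a2
    · rw [hp2, hz]; simp
  · rintro ⟨k, hk⟩
    have hX := congrFun hk 0
    have hY := congrFun hk 1
    have hZ := congrFun hk 2
    rw [mulVec_cv] at hX hY hZ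
    simp [mapVec, hp2] at hX hY hZ
    rw [hZ] at a1 a3 a4
    rw [hX] at a0
    rw [hY] at a2
    refine ⟨-(k * ev σ (N 2) s u) / (σ τ - σ (τ ^ q)), ?_⟩
    generalize (M5.map ψ).mulVec (nv s u) = v at *
    have v1 : v 1 = -(k * ev σ (N 2) s u) / (σ τ - σ (τ ^ q)) * -σ (ptInfVec t 0) := by
      rw [div_mul_eq_mul_div, eq_div_iff hd]
      linear_combination a0 - a1
    have v3 : v 3 = -(k * ev σ (N 2) s u) / (σ τ - σ (τ ^ q)) * -σ (ptInfVec t 1) := by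
      rw [div_mul_eq_mul_div, eq_div_iff hd]
      linear_combination a2 - a3
    rw [hpt]
    ext i
    fin_cases i
    · have : v 0 = - (v 1 * σ (τ ^ q)) := by linear_combination a1
      simp [mapVec, this, v1]; ring
    · simp [mapVec, v1]
    · have : v 2 = - (v 3 * σ (τ ^ q)) := by linear_combination a3
      simp [mapVec, this, v3]; ring
    · simp [mapVec, v3]
    · simp [mapVec, a4]

end dat

lemma map_mulVec_nv {E F : Type} [Field E] [Field F] (ψ : F →+* E) (M5 : Matrix (Fin 5) (Fin 5) F)
    (s t : F) (i : Fin 5) :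
    (M5.map ψ).mulVec (nv (ψ s) (ψ t)) i = ψ (M5.mulVec (nv s t) i) := by
  simp [Matrix.mulVec, dotProduct, Fin.sum_univ_five, nv]

lemma ev_fr {F : Type} [Field F] [Algebra F K] (fr : K →ₐ[F] K)
    (M : Matrix (Fin 3) (Fin 3) K) (i : Fin 3) (s t : K) :
    ev (RingHom.id K) ((M.map fr) i) (fr s) (fr t) = fr (ev (RingHom.id K) (M i) s t) := by
  simp [ev]

lemma img_lem {F : Type} [Field F] [Algebra F K] (fr : K →ₐ[F] K)
    {M : Matrix (Fin 3) (Fin 3) K} {τ : K} {q : ℕ} {M5 : Matrix (Fin 5) (Fin 5) F}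
    (d : Dat F (RingHom.id K) (algebraMap F K) M (M.map fr) τ q M5)
    (hτF : τ ∉ Set.range (algebraMap F K)) (c0 c1 : K → F)
    (hc : ∀ x : K, x = algebraMap F K (c0 x) + algebraMap F K (c1 x) * τ) (s t : F)
    (hz : ev (RingHom.id K) (M 2) (algebraMap F K s) (algebraMap F K t) ≠ 0)
    (hne : M.mulVec (cv (algebraMap F K s) (algebraMap F K t)) ≠ 0)
    (hne5 : M5.mulVec (nv s t) ≠ 0) :
    bb c0 c1 (Projectivization.mk K _ hne) = Projectivization.mk F _ hne5 := by
  have hz2 : ev (RingHom.id K) ((M.map fr) 2) (algebraMap F K s) (algebraMap F K t)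
      = fr (ev (RingHom.id K) (M 2) (algebraMap F K s) (algebraMap F K t)) := by
    rw [← ev_fr]; simp
  have e1 := d.e01 (algebraMap F K s) (algebraMap F K t)
  have e2 := d.e23 (algebraMap F K s) (algebraMap F K t)
  have e4 := d.e4 (algebraMap F K s) (algebraMap F K t)
  simp only [map_mulVec_nv, hz2, RingHom.id_apply] at e1 e2 e4
  obtain ⟨a, ha, hrep⟩ := mk_rep_smul _ hne
  unfold bb
  symm
  rw [Projectivization.mk_eq_mk_iff']
  refine ⟨M5.mulVec (nv s t) 4, ?_⟩
  have hb : bbVec c0 c1 (Projectivization.mk K _ hne) =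
      ![c0 (ev (RingHom.id K) (M 0) (algebraMap F K s) (algebraMap F K t) /
          ev (RingHom.id K) (M 2) (algebraMap F K s) (algebraMap F K t)),
        c1 (ev (RingHom.id K) (M 0) (algebraMap F K s) (algebraMap F K t) /
          ev (RingHom.id K) (M 2) (algebraMap F K s) (algebraMap F K t)),
        c0 (ev (RingHom.id K) (M 1) (algebraMap F K s) (algebraMap F K t) /
          ev (RingHom.id K) (M 2) (algebraMap F K s) (algebraMap F K t)),
        c1 (ev (RingHom.id K) (M 1) (algebraMap F K s) (algebraMap F K t) /
          ev (RingHom.id K) (M 2) (algebraMap F K s) (algebraMap F K t)), 1] := by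
    unfold bbVec
    rw [hrep]
    simp only [Pi.smul_apply, smul_eq_mul, mulVec_cv_id, mul_div_mul_left _ _ ha]
  rw [hb]
  generalize M5.mulVec (nv s t) = v at *
  generalize ev (RingHom.id K) (M 0) (algebraMap F K s) (algebraMap F K t) = X at *
  generalize ev (RingHom.id K) (M 1) (algebraMap F K s) (algebraMap F K t) = Y at *
  generalize ev (RingHom.id K) (M 2) (algebraMap F K s) (algebraMap F K t) = Z at *
  have key : ∀ (x y : F) (X : K), algebraMap F K x + algebraMap F K y * τ = X * fr Z →
      x = v 4 * c0 (X / Z) ∧ y = v 4 * c1 (X / Z) := by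
    intro x y X h
    apply coord_unique hτF
    rw [h, map_mul, map_mul, mul_assoc, ← mul_add, ← hc, e4]
    field_simp
  obtain ⟨k0, k1⟩ := key _ _ _ e1
  obtain ⟨k2, k3⟩ := key _ _ _ e2
  ext i
  fin_cases i <;> simp
  · exact k0.symm
  · exact k1.symm
  · exact k2.symm
  · exact k3.symm

lemma mk_mem_projPt_iff {v w : Fin n → K} (hv : v ≠ 0) (hw : w ≠ 0) :
    Projectivization.mk K v hv ∈ projPt w ↔ ∃ a : K, w = a • v := by
  constructor
  · rintro ⟨_, h⟩
    rw [eq_comm, Projectivization.mk_eq_mk_iff'] at h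
    obtain ⟨a, ha⟩ := h
    exact ⟨a, ha.symm⟩
  · rintro ⟨a, ha⟩
    refine ⟨hw, ?_⟩
    rw [eq_comm, Projectivization.mk_eq_mk_iff']
    exact ⟨a, ha.symm⟩

lemma mapVec_id (v : Fin n → K) : mapVec (RingHom.id K) v = v := rfl

lemma gpt_conic {F : Type} [Field F] [Algebra F K]
    {M N : Matrix (Fin 3) (Fin 3) K} {τ : K} {q : ℕ} {M5 : Matrix (Fin 5) (Fin 5) F}
    (d : Dat F (RingHom.id K) (algebraMap F K) M N τ q M5) (t : Option K) :
    gpt τ q t ∈ mimg (M5.map (algebraMap F K)) (nrcVecs (Set.univ : Set K)) ↔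
      ptInf t ∈ mimg M (conicVecs (Set.univ : Set K)) := by
  rw [mem_mimg_nrc, mem_mimg_conic_univ]
  refine exists_congr fun s => exists_congr fun u => and_congr_right fun h => ?_
  unfold gpt ptInf
  rw [mk_mem_projPt_iff _ (d.ne h), mk_mem_projPt_iff _ (mulVec_ne d.hM (cv_ne h))]
  exact d.gpt_iff h t

lemma case2 {F : Type} [Field F] [Algebra F K]
    {M N : Matrix (Fin 3) (Fin 3) K} {τ : K} {q : ℕ} {M5 : Matrix (Fin 5) (Fin 5) F}
    (d : Dat F (RingHom.id K) (algebraMap F K) M N τ q M5) (tP : Option K)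
    (hD : mimg M (conicVecs (Set.univ : Set K)) ∩ linf K = {ptInf tP}) :
    mimg (M5.map (algebraMap F K)) (nrcVecs (Set.univ : Set K)) ∩ gline τ q
            = {gpt τ q tP} := by
  have hg : gline τ q = glineL (RingHom.id K) τ q := rfl
  ext p
  constructor
  · rintro ⟨hp, hpg⟩
    rw [mem_mimg_nrc] at hp
    obtain ⟨s, u, h, hne, rfl⟩ := hp
    rw [hg] at hpg
    unfold glineL at hpg
    rw [mk_mem_ptsOf, d.g_iff h] at hpg
    have hne' := mulVec_ne d.hM (cv_ne h)
    have h1 : Projectivization.mk K _ hne' ∈ ({ptInf tP} : Set (PP K 3)) := by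
      rw [← hD]
      refine ⟨?_, ?_⟩
      · rw [mem_mimg_conic_univ]; exact ⟨s, u, h, hne', rfl⟩
      · rw [mk_mem_linf, mulVec_cv_id]; exact hpg
    rw [Set.mem_singleton_iff] at h1 ⊢
    unfold ptInf at h1
    rw [Projectivization.mk_eq_mk_iff'] at h1
    obtain ⟨a, ha⟩ := h1
    obtain ⟨c, hc⟩ := (d.gpt_iff h tP).mpr ⟨a, ha.symm⟩
    unfold gpt
    rw [Projectivization.mk_eq_mk_iff']
    exact ⟨c, hc.symm⟩
  · intro hp
    rw [Set.mem_singleton_iff] at hp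
    subst hp
    refine ⟨?_, ?_⟩
    · rw [gpt_conic d]
      have : ptInf tP ∈ ({ptInf tP} : Set (PP K 3)) := rfl
      rw [← hD] at this
      exact this.1
    · rw [hg]
      unfold glineL gpt
      rw [mk_mem_ptsOf, mem_span_g, gptVec_eq]
      simp

lemma case3a {F : Type} [Field F] [Algebra F K] (fr : K →ₐ[F] K) (hinv : ∀ x, fr (fr x) = x)
    {M : Matrix (Fin 3) (Fin 3) K} {τ : K} {q : ℕ} {M5 : Matrix (Fin 5) (Fin 5) F}
    (d : Dat F (RingHom.id K) (algebraMap F K) M (M.map fr) τ q M5)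
    (hz : ∀ s t : K, (s ≠ 0 ∨ t ≠ 0) → ev (RingHom.id K) (M 2) s t ≠ 0) :
    mimg (M5.map (algebraMap F K)) (nrcVecs (Set.univ : Set K)) ∩ sinf K = ∅ := by
  rw [Set.eq_empty_iff_forall_notMem]
  rintro p ⟨hp, hs⟩
  rw [mem_mimg_nrc] at hp
  obtain ⟨s, u, h, hne, rfl⟩ := hp
  rw [mk_mem_sinf, d.e4, mul_eq_zero] at hs
  rcases hs with hs | hs
  · exact hz s u h hs
  · rw [← hinv s, ← hinv u, ev_fr, map_eq_zero] at hs
    exact hz _ _ (by simpa using h) hs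

lemma case3b {F L : Type} [Field F] [Algebra F K] [Field L] [Fintype K] [Fintype L] [Algebra K L]
    (hcard : Fintype.card L = Fintype.card K ^ 2) {ψ : F →+* L}
    {M N : Matrix (Fin 3) (Fin 3) K} {τ : K} {q : ℕ} {M5 : Matrix (Fin 5) (Fin 5) F}
    (d : Dat F (algebraMap K L) ψ M N τ q M5)
    (hz : ∀ s t : K, (s ≠ 0 ∨ t ≠ 0) → ev (RingHom.id K) (M 2) s t ≠ 0) :
    (mimg (M5.map ψ) (nrcVecs (Set.univ : Set L)) ∩ glineL (algebraMap K L) τ q).ncard = 2 := by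
  have h22 : M 2 2 ≠ 0 := by simpa [ev] using hz 0 1 (Or.inr one_ne_zero)
  obtain ⟨θ, θ', hne, hroot⟩ := two_roots_L (L := L) hcard (M 2 0) (M 2 1) (M 2 2) h22 (by
    intro x
    simpa [ev] using hz 1 x (Or.inl one_ne_zero))
  have n1 := d.ne (s := 1) (t := θ) (Or.inl one_ne_zero)
  have n2 := d.ne (s := 1) (t := θ') (Or.inl one_ne_zero)
  have hev : ∀ x : L, ev (algebraMap K L) (M 2) 1 x = 0 ↔ (x = θ ∨ x = θ') := by
    intro x
    rw [← hroot]
    simp [ev]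
  have hset : mimg (M5.map ψ) (nrcVecs (Set.univ : Set L)) ∩ glineL (algebraMap K L) τ q
      = {Projectivization.mk L _ n1, Projectivization.mk L _ n2} := by
    ext p
    simp only [Set.mem_inter_iff, Set.mem_insert_iff, Set.mem_singleton_iff]
    constructor
    · rintro ⟨hp, hg⟩
      rcases hp with ⟨v, (⟨x, -, rfl⟩ | rfl), hne', rfl⟩
      · have hx : (![1, x, x ^ 2, x ^ 3, x ^ 4] : Fin 5 → L) = nv 1 x := by simp [nv]
        simp only [hx] at hg ⊢
        unfold glineL at hg
        rw [mk_mem_ptsOf, d.g_iff (Or.inl one_ne_zero), hev] at hg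
        rcases hg with rfl | rfl
        · left; rfl
        · right; rfl
      · have hx : (![0, 0, 0, 0, 1] : Fin 5 → L) = nv 0 1 := by simp [nv]
        simp only [hx] at hg ⊢
        unfold glineL at hg
        rw [mk_mem_ptsOf, d.g_iff (Or.inr one_ne_zero)] at hg
        exfalso
        simp [ev, h22] at hg
    · have aux : ∀ (x : L) (hx : x = θ ∨ x = θ') (n : (M5.map ψ).mulVec (nv 1 x) ≠ 0),
          Projectivization.mk L _ n ∈ mimg (M5.map ψ) (nrcVecs (Set.univ : Set L)) ∧
          Projectivization.mk L _ n ∈ glineL (algebraMap K L) τ q := by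
        intro x hx n
        refine ⟨?_, ?_⟩
        · rw [mem_mimg_nrc]; exact ⟨1, x, Or.inl one_ne_zero, n, rfl⟩
        · unfold glineL
          rw [mk_mem_ptsOf, d.g_iff (Or.inl one_ne_zero), hev]; exact hx
      rintro (rfl | rfl)
      · exact aux θ (Or.inl rfl) n1
      · exact aux θ' (Or.inr rfl) n2
  rw [hset, Set.ncard_pair]
  intro heq
  rw [Projectivization.mk_eq_mk_iff'] at heq
  obtain ⟨a, ha⟩ := heq
  rw [← Matrix.mulVec_smul] at ha
  have h5 := mulVec_inj _ (map_det_unit d.h5 ψ) ha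
  have b0 := congrFun h5 0
  have b1 := congrFun h5 1
  simp [nv] at b0 b1
  rw [b0, one_mul] at b1
  exact hne b1.symm

lemma case3c {F L : Type} [Field F] [Algebra F K] [Field L] {σ : K →+* L} {ψ : F →+* L}
    {M N : Matrix (Fin 3) (Fin 3) K} {τ : K} {q : ℕ} {M5 : Matrix (Fin 5) (Fin 5) F}
    (d : Dat F σ ψ M N τ q M5)
    (hD : mimg M (conicVecs (Set.univ : Set K)) ∩ linf K = ∅) :
    mimg (M5.map ψ) (nrcVecs (Set.univ : Set L)) ∩ gKinL σ τ q = ∅ := by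
  rw [Set.eq_empty_iff_forall_notMem]
  rintro p ⟨hp, hg⟩
  rw [mem_mimg_nrc] at hp
  obtain ⟨s, u, h, hne, rfl⟩ := hp
  unfold gKinL at hg
  rw [Set.mem_iUnion] at hg
  obtain ⟨t, hg⟩ := hg
  obtain ⟨a, ha, hg⟩ := mk_mem_projPt hg
  obtain ⟨k, hk⟩ := (d.gpt_iff h t).mp ⟨a, hg⟩
  obtain ⟨w, hw⟩ : ∃ w, M.mulVec w = ptInfVec t :=
    ⟨M⁻¹.mulVec (ptInfVec t),
      by rw [Matrix.mulVec_mulVec, Matrix.mul_nonsing_inv M d.hM, Matrix.one_mulVec]⟩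
  have hmw : mapVec σ (M.mulVec w) = (M.map σ).mulVec (mapVec σ w) := by
    ext i
    simp [mapVec, Matrix.mulVec, dotProduct]
  rw [← hw, hmw, ← Matrix.mulVec_smul] at hk
  have hk' := mulVec_inj _ (map_det_unit d.hM σ) hk
  have hk0 : k ≠ 0 := by
    rintro rfl
    exact cv_ne h (by rw [hk']; simp)
  have b0 := congrFun hk' 0
  have b1 := congrFun hk' 1
  have b2 := congrFun hk' 2
  simp [cv, mapVec] at b0 b1 b2
  have hww : w 1 ^ 2 = w 0 * w 2 := by
    apply σ.injective
    rw [map_mul, map_pow]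
    apply mul_left_cancel₀ (pow_ne_zero 2 hk0)
    have : k ^ 2 * σ (w 1) ^ 2 = (k * σ (w 1)) ^ 2 := by ring
    rw [this, ← b1]
    have : k ^ 2 * (σ (w 0) * σ (w 2)) = (k * σ (w 0)) * (k * σ (w 2)) := by ring
    rw [this, ← b0, ← b2]
    ring
  have hn : M.mulVec w ≠ 0 := by rw [hw]; exact ptInfVec_ne t
  have hin : Projectivization.mk K _ hn ∈ mimg M (conicVecs (Set.univ : Set K)) ∩ linf K := by
    refine ⟨(mem_conic_iff M d.hM w hn).mpr hww, ?_⟩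
    rw [mk_mem_linf, hw, ptInfVec_two]
  rw [hD] at hin
  exact hin
/-- An `F_q`-conic `C` avoiding `T̄` in a Baer subplane tangent to `ℓ∞` at `T̄`
corresponds in `PG(4,q)` to a `g`-special or `g✶`-special 4-dimensional normal rational
curve, the points of `g` on the extended curve corresponding to the points of
`C⁺ ∩ ℓ∞`. -/
theorem statement_18
    {F K : Type} [Field F] [Field K] [Fintype F] [Fintype K] [Algebra F K]
    (q : ℕ) (hq : Fintype.card F = q) (hK : Fintype.card K = q ^ 2)
    (τ : K) (t0 t1 : F)
    (hτ : τ ^ 2 = algebraMap F K t1 * τ + algebraMap F K t0)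
    (hτF : τ ∉ Set.range (algebraMap F K))
    (c0 c1 : K → F)
    (hc : ∀ x : K, x = algebraMap F K (c0 x) + algebraMap F K (c1 x) * τ)
    {L : Type} [Field L] [Fintype L] [Algebra K L] [Algebra F L] [IsScalarTower F K L]
    (hL : Fintype.card L = q ^ 4)
    (hq7 : 7 < q)
    (B : Set (PP K 3)) (hB : IsBaerSubplane F B)
    (tT : Option K) (hT : B ∩ linf K = {ptInf tT})
    (C : Set (PP K 3)) (hC : IsFqConic F C) (hCB : C ⊆ B) (hTC : ptInf tT ∉ C) :
    ∃ M5 : Matrix (Fin 5) (Fin 5) F, IsUnit M5.det ∧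
      bb c0 c1 '' C = mimg M5 (nrcVecs (Set.univ : Set F)) ∧
      mimg M5 (nrcVecs (Set.univ : Set F)) ∩ sinf F = ∅ ∧
      (∀ p ∈ mimg (M5.map (algebraMap F L)) (nrcVecs (Set.univ : Set L)),
        p ∈ sinf L →
          p ∈ glineL (algebraMap K L) τ q ∪ gqlineL (algebraMap K L) τ) ∧
      (∀ D : Set (PP K 3), IsFq2Conic D → C ⊆ D →
        (∀ tP tQ : Option K, ptInf tP ≠ ptInf tQ →
          D ∩ linf K = {ptInf tP, ptInf tQ} →
            gpt τ q tP ∈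
              mimg (M5.map (algebraMap F K)) (nrcVecs (Set.univ : Set K)) ∧
            gpt τ q tQ ∈
              mimg (M5.map (algebraMap F K)) (nrcVecs (Set.univ : Set K))) ∧
        (∀ tP : Option K, D ∩ linf K = {ptInf tP} →
          mimg (M5.map (algebraMap F K)) (nrcVecs (Set.univ : Set K)) ∩ gline τ q
            = {gpt τ q tP}) ∧
        (D ∩ linf K = ∅ →
          mimg (M5.map (algebraMap F K)) (nrcVecs (Set.univ : Set K)) ∩ sinf K
            = ∅ ∧
          (mimg (M5.map (algebraMap F L)) (nrcVecs (Set.univ : Set L)) ∩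
            glineL (algebraMap K L) τ q).ncard = 2 ∧
          mimg (M5.map (algebraMap F L)) (nrcVecs (Set.univ : Set L)) ∩
            gKinL (algebraMap K L) τ q = ∅)) := by
  obtain ⟨M, hM, rfl⟩ := hC
  obtain ⟨N, hN, rfl⟩ := hB
  have hF5 : 5 ≤ Fintype.card F := by omega
  obtain ⟨fr, hfr⟩ : ∃ fr : K →ₐ[F] K, ∀ x, fr x = x ^ q :=
    ⟨FiniteField.frobeniusAlgHom F K, fun x => by simp [hq]⟩
  have hinv : ∀ x, fr (fr x) = x := by
    intro x
    rw [hfr, hfr, ← pow_mul, ← pow_two, ← hK, FiniteField.pow_card]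
  have hfix : ∀ x, fr x = x → x ∈ Set.range (algebraMap F K) := by
    intro x hx
    apply fixed_mem_range
    rw [hq, ← hfr, hx]
  have hττ : τ ≠ fr τ := fun h => hτF (hfix τ h.symm)
  have hne3 : ∀ s t : F, (s ≠ 0 ∨ t ≠ 0) →
      M.mulVec (cv (algebraMap F K s) (algebraMap F K t)) ≠ 0 :=
    fun s t h => mulVec_ne hM (cv_ne (by simpa using h))
  have hCz : ∀ s t : F, (s ≠ 0 ∨ t ≠ 0) →
      ev (RingHom.id K) (M 2) (algebraMap F K s) (algebraMap F K t) ≠ 0 := by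
    intro s t h hz
    have h1 : Projectivization.mk K _ (hne3 s t h) ∈
        mimg M (conicVecs (Set.range (algebraMap F K))) := by
      rw [mem_mimg_conic]; exact ⟨s, t, h, hne3 s t h, rfl⟩
    have h2 : Projectivization.mk K _ (hne3 s t h) ∈ ({ptInf tT} : Set (PP K 3)) := by
      rw [← hT]
      refine ⟨hCB h1, ?_⟩
      rw [mk_mem_linf, mulVec_cv_id, hz]
    rw [Set.mem_singleton_iff] at h2
    rw [h2] at h1
    exact hTC h1
  have hBz : ¬ ∃ y z : F, M 2 1 = M 2 0 * algebraMap F K y ∧ M 2 2 = M 2 0 * algebraMap F K z := by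
    rintro ⟨y, z, hy, hz⟩
    have aux : ∀ u : Fin 3 → F, u ≠ 0 → M.mulVec (algVec F u) ≠ 0 := by
      intro u hu
      apply mulVec_ne hM
      intro h0
      apply hu
      ext i
      have := congrFun h0 i
      simpa [algVec] using this
    have hu1 : (![y, -1, 0] : Fin 3 → F) ≠ 0 := fun h => by simpa using congrFun h 1
    have hu2 : (![z, 0, -1] : Fin 3 → F) ≠ 0 := fun h => by simpa using congrFun h 2
    have aux2 : ∀ (u : Fin 3 → F) (hu : u ≠ 0), M.mulVec (algVec F u) 2 = 0 →
        Projectivization.mk K _ (aux u hu) = ptInf tT := by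
      intro u hu h0
      rw [← Set.mem_singleton_iff, ← hT]
      refine ⟨baer_lem hF5 M N hM hN hCB u (aux u hu), ?_⟩
      rw [mk_mem_linf, h0]
    have p1 := aux2 _ hu1 (by
      simp [Matrix.mulVec, dotProduct, Fin.sum_univ_three, algVec, hy])
    have p2 := aux2 _ hu2 (by
      simp [Matrix.mulVec, dotProduct, Fin.sum_univ_three, algVec, hz])
    rw [← p2, Projectivization.mk_eq_mk_iff'] at p1
    obtain ⟨a, ha⟩ := p1
    rw [← Matrix.mulVec_smul] at ha
    have := congrFun (mulVec_inj M hM ha) 1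
    simp [algVec] at this
  have hres := res_ne fr hinv hfix (M 2 0) (M 2 1) (M 2 2)
    (by intro s t h; simpa [ev] using hCz s t h) hBz
  have h20 : M 2 0 ≠ 0 := by simpa [ev] using hCz 1 0 (Or.inl one_ne_zero)
  have hr := rel_M5 fr hinv hfix hτF c0 c1 hc M
  have h5 : IsUnit (M5mat c0 c1 M (M.map fr)).det :=
    rel_det hr fr hττ (hinv τ) hM h20 (by simpa using h20) (by simpa using hres)
  generalize M5mat c0 c1 M (M.map fr) = M5 at hr h5
  have hMf : IsUnit (M.map fr).det := map_det_unit hM (fr : K →+* K)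
  rw [hfr] at hr hττ
  have dK : Dat F (RingHom.id K) (algebraMap F K) M (M.map fr) τ q M5 :=
    ⟨hr, fun _ => rfl, hM, hMf, h5, hττ⟩
  have dL : Dat F (algebraMap K L) (algebraMap F L) M (M.map fr) τ q M5 :=
    ⟨hr, fun x => IsScalarTower.algebraMap_apply F K L x, hM, hMf, h5, hττ⟩
  refine ⟨M5, h5, ?_, ?_, fun p hp hs => dL.inf p hp hs, ?_⟩
  · ext p
    rw [mem_mimg_nrc]
    constructor
    · rintro ⟨x, hx, rfl⟩
      rw [mem_mimg_conic] at hx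
      obtain ⟨s, t, h, hn, rfl⟩ := hx
      exact ⟨s, t, h, mulVec_ne h5 (nv_ne h),
        img_lem fr dK hτF c0 c1 hc s t (hCz s t h) hn _⟩
    · rintro ⟨s, t, h, hn, rfl⟩
      refine ⟨Projectivization.mk K _ (hne3 s t h), ?_,
        img_lem fr dK hτF c0 c1 hc s t (hCz s t h) _ hn⟩
      rw [mem_mimg_conic]; exact ⟨s, t, h, hne3 s t h, rfl⟩
  · rw [Set.eq_empty_iff_forall_notMem]
    rintro p ⟨hp, hs⟩
    rw [mem_mimg_nrc] at hp
    obtain ⟨s, t, h, hn, rfl⟩ := hp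
    rw [mk_mem_sinf] at hs
    have e4 := dK.e4 (algebraMap F K s) (algebraMap F K t)
    rw [map_mulVec_nv, hs, map_zero] at e4
    have hz2 : ev (RingHom.id K) ((M.map fr) 2) (algebraMap F K s) (algebraMap F K t)
        = fr (ev (RingHom.id K) (M 2) (algebraMap F K s) (algebraMap F K t)) := by
      rw [← ev_fr]; simp
    rw [hz2] at e4
    have := hCz s t h
    refine mul_ne_zero this ?_ e4.symm
    rw [Ne, map_eq_zero]; exact this
  · rintro D ⟨D0, hD0, rfl⟩ hCD
    rw [conic_unique hF5 M D0 hM hD0 hCD]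
    refine ⟨?_, ?_, ?_⟩
    · intro tP tQ _ hD
      rw [gpt_conic dK, gpt_conic dK]
      refine ⟨?_, ?_⟩
      · have : ptInf tP ∈ ({ptInf tP, ptInf tQ} : Set (PP K 3)) := by simp
        rw [← hD] at this
        exact this.1
      · have : ptInf tQ ∈ ({ptInf tP, ptInf tQ} : Set (PP K 3)) := by simp
        rw [← hD] at this
        exact this.1
    · intro tP hD
      exact case2 dK tP hD
    · intro hD
      have hz : ∀ s t : K, (s ≠ 0 ∨ t ≠ 0) → ev (RingHom.id K) (M 2) s t ≠ 0 := by
        intro s t h h0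
        have hn := mulVec_ne hM (cv_ne h)
        have : Projectivization.mk K _ hn ∈
            mimg M (conicVecs (Set.univ : Set K)) ∩ linf K := by
          refine ⟨?_, ?_⟩
          · rw [mem_mimg_conic_univ]; exact ⟨s, t, h, hn, rfl⟩
          · rw [mk_mem_linf, mulVec_cv_id]; exact h0
        rw [hD] at this
        exact this
      have hcard : Fintype.card L = Fintype.card K ^ 2 := by
        rw [hL, hK, ← pow_mul]
      exact ⟨case3a fr hinv dK hz, case3b hcard dL hz, case3c dL hD⟩

end BaerConics
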